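/- arXiv:1811.04844 — 7 statements merged into one kernel-verified Lean document; each statement's English description precedes it below -/
import Mathlib

section
/- For every integer n ≥ 1 and every x ∈ (-1,1), the principal-value integral (1/π) p.v. ∫_{-1}^{1} √(1−y²)·U_{n−1}(y) / (x−y) dy equals T_n(x), where T_n and U_n are the Chebyshev polynomials of the first and second kind. -/
open MeasureTheory Real Filter Topology Set

/-- Chebyshev polynomial of the first kind, `T_k`, evaluated at a real number. -/
noncomputable def chebT (k : ℕ) (x : ℝ) : ℝ := (Polynomial.Chebyshev.T ℝ k).eval x

/-- Chebyshev polynomial of the second kind, `U_k`, evaluated at a real number. -/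
noncomputable def chebU (k : ℕ) (x : ℝ) : ℝ := (Polynomial.Chebyshev.U ℝ k).eval x

/-- `HasHilbertTransform f x L` means the Hilbert transform
`Hf(x) = (1/π) · p.v. ∫ f(y)/(x−y) dy` exists and equals `L`, the principal value
being the limit as `ε → 0⁺` of the integral over `{y : |x−y| > ε}`. -/
def HasHilbertTransform (f : ℝ → ℝ) (x L : ℝ) : Prop :=
  Tendsto (fun ε : ℝ => (1 / π) * ∫ y in {y : ℝ | ε < |x - y|}, f y / (x - y))
    (𝓝[>] 0) (𝓝 L)


open Polynomial.Chebyshev in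
/-- `∫ √(1-y²) U_k = (∫ T_k dμ - ∫ T_{k+2} dμ) / 2`. -/
lemma weighted_U_integral (k : ℕ) :
    ∫ y in (-1 : ℝ)..1, Real.sqrt (1 - y ^ 2) * chebU k y = if k = 0 then π / 2 else 0 := by
  have key : ∫ y in (-1 : ℝ)..1, Real.sqrt (1 - y ^ 2) * chebU k y
      = ∫ y, ((T ℝ (k : ℤ)).eval y - (T ℝ ((k : ℤ) + 2)).eval y) / 2 ∂measureT := by
    rw [integral_measureT]
    apply intervalIntegral.integral_congr
    intro y hy
    rw [uIcc_of_le (by norm_num)] at hy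
    have h1 : 0 ≤ 1 - y ^ 2 := by nlinarith [hy.1, hy.2]
    have h2 := congrArg (Polynomial.eval y) (one_sub_X_sq_mul_U_eq_pol_in_T ℝ (k : ℤ))
    have h3 := congrArg (Polynomial.eval y) (T_add_two ℝ (k : ℤ))
    rw [T_add_two] at h2
    simp only [Polynomial.eval_mul, Polynomial.eval_sub, Polynomial.eval_pow, Polynomial.eval_X,
      Polynomial.eval_one, Polynomial.eval_ofNat] at h2 h3
    have h4 : ((T ℝ (k : ℤ)).eval y - (T ℝ ((k : ℤ) + 2)).eval y) / 2
        = (1 - y ^ 2) * chebU k y := by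
      unfold chebU
      linarith
    simp only [h4, Real.sqrt_inv]
    have h5 : (1 - y ^ 2) * (√(1 - y ^ 2))⁻¹ = √(1 - y ^ 2) := by
      rw [← div_eq_mul_inv, Real.div_sqrt]
    linear_combination (-chebU k y) * h5
  rw [key, MeasureTheory.integral_div, MeasureTheory.integral_sub
    (integrable_measureT (by fun_prop)) (integrable_measureT (by fun_prop)),
    integral_eval_T_real_measureT_of_ne_zero (n := (k : ℤ) + 2) (by omega)]
  split_ifs with h
  · subst h
    have := integral_eval_T_real_measureT_zero
    simp only [Nat.cast_zero, this]; ring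
  · rw [integral_eval_T_real_measureT_of_ne_zero (by omega)]; simp

lemma continuous_weight_U (k : ℕ) : Continuous fun y : ℝ => Real.sqrt (1 - y ^ 2) * chebU k y := by
  unfold chebU; fun_prop

/-- The truncated domain splits into two intervals. -/
lemma truncated_split (x ε : ℝ) (h0 : 0 < ε) (h1 : ε < 1 - x) (h2 : ε < 1 + x) (f : ℝ → ℝ)
    (hf : ContinuousOn f {x}ᶜ) :
    IntervalIntegrable f volume (-1) (x - ε) ∧ IntervalIntegrable f volume (x + ε) 1 ∧
    ∫ y in Set.Ioo (-1 : ℝ) 1 ∩ {y : ℝ | ε < |x - y|}, f y =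
      (∫ y in (-1 : ℝ)..(x - ε), f y) + ∫ y in (x + ε)..1, f y := by
  have i1 : IntervalIntegrable f volume (-1) (x - ε) := by
    apply ContinuousOn.intervalIntegrable_of_Icc (by linarith)
    apply hf.mono
    intro y hy hyx
    simp at hyx
    linarith [hy.2]
  have i2 : IntervalIntegrable f volume (x + ε) 1 := by
    apply ContinuousOn.intervalIntegrable_of_Icc (by linarith)
    apply hf.mono
    intro y hy hyx
    simp at hyx
    linarith [hy.1]
  refine ⟨i1, i2, ?_⟩
  have hs : Set.Ioo (-1 : ℝ) 1 ∩ {y : ℝ | ε < |x - y|}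
      = Set.Ioo (-1) (x - ε) ∪ Set.Ioo (x + ε) 1 := by
    ext y
    simp only [mem_inter_iff, mem_Ioo, mem_ofPred_eq, mem_union, lt_abs]
    constructor
    · rintro ⟨⟨a, b⟩, c | c⟩
      · left; constructor <;> linarith
      · right; constructor <;> linarith
    · rintro (⟨a, b⟩ | ⟨a, b⟩)
      · exact ⟨⟨a, by linarith⟩, Or.inl (by linarith)⟩
      · exact ⟨⟨by linarith, b⟩, Or.inr (by linarith)⟩
  rw [intervalIntegrable_iff_integrableOn_Ioo_of_le (by linarith)] at i1 i2
  rw [hs, setIntegral_union _ measurableSet_Ioo i1 i2,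
    intervalIntegral.integral_of_le (by linarith), intervalIntegral.integral_of_le (by linarith),
    integral_Ioc_eq_integral_Ioo, integral_Ioc_eq_integral_Ioo]
  rw [Set.disjoint_left]
  intro y hy hy'
  linarith [hy.2, hy'.1]

lemma eventually_small (x : ℝ) (hx : x ∈ Set.Ioo (-1 : ℝ) 1) :
    ∀ᶠ ε : ℝ in 𝓝[>] 0, 0 < ε ∧ ε < 1 - x ∧ ε < 1 + x := by
  have a := Ioo_mem_nhdsGT (show (0 : ℝ) < 1 - x by linarith [hx.2])
  have b := Ioo_mem_nhdsGT (show (0 : ℝ) < 1 + x by linarith [hx.1])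
  filter_upwards [a, b] with ε h1 h2 using ⟨h1.1, h1.2, h2.2⟩

lemma tendsto_truncated (x : ℝ) (hx : x ∈ Set.Ioo (-1 : ℝ) 1) (f : ℝ → ℝ) (hf : Continuous f) :
    Tendsto (fun ε : ℝ => ∫ y in Set.Ioo (-1 : ℝ) 1 ∩ {y : ℝ | ε < |x - y|}, f y)
      (𝓝[>] 0) (𝓝 (∫ y in (-1 : ℝ)..1, f y)) := by
  have hc := intervalIntegral.continuous_primitive (μ := volume)
    (fun a b => hf.intervalIntegrable a b)
  have h : Continuous fun ε : ℝ =>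
      (∫ y in (-1 : ℝ)..(x - ε), f y) + -∫ y in (1 : ℝ)..(x + ε), f y := by
    exact ((hc (-1)).comp (by fun_prop : Continuous fun ε : ℝ => x - ε)).add
      ((hc 1).comp (by fun_prop : Continuous fun ε : ℝ => x + ε)).neg
  have h0 := (h.tendsto 0).mono_left (nhdsWithin_le_nhds (s := Ioi 0))
  simp only [← intervalIntegral.integral_symm] at h0
  simp only [sub_zero, add_zero, intervalIntegral.integral_add_adjacent_intervals
    (hf.intervalIntegrable (μ := volume) (-1) x) (hf.intervalIntegrable (μ := volume) x 1)] at h0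
  refine h0.congr' ?_
  filter_upwards [eventually_small x hx] with ε hε
  exact ((truncated_split x ε hε.1 hε.2.1 hε.2.2 f hf.continuousOn).2.2).symm

/-- Regular part of the antiderivative. -/
noncomputable def antiReg (x y : ℝ) : ℝ :=
  x * arcsin y - √(1 - y ^ 2) + √(1 - x ^ 2) * Real.log (1 - x * y + √(1 - x ^ 2) * √(1 - y ^ 2))

lemma antiReg_pos (x : ℝ) (hx : x ∈ Set.Ioo (-1 : ℝ) 1) (y : ℝ) (hy : y ∈ Icc (-1 : ℝ) 1) :
    0 < 1 - x * y + √(1 - x ^ 2) * √(1 - y ^ 2) := by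
  have : 0 < 1 - x * y := by
    obtain ⟨a, b⟩ := hx
    obtain ⟨c, d⟩ := hy
    rcases le_total 0 y with h | h
    · nlinarith
    · nlinarith
  positivity

lemma antiReg_continuousOn (x : ℝ) (hx : x ∈ Set.Ioo (-1 : ℝ) 1) :
    ContinuousOn (antiReg x) (Icc (-1) 1) := by
  unfold antiReg
  refine ContinuousOn.add (by fun_prop) (ContinuousOn.mul (by fun_prop) ?_)
  exact ContinuousOn.log (by fun_prop) (fun y hy => (antiReg_pos x hx y hy).ne')

lemma anti_hasDerivAt (x : ℝ) (hx : x ∈ Set.Ioo (-1 : ℝ) 1) (y : ℝ) (hy : y ∈ Ioo (-1 : ℝ) 1)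
    (hxy : x ≠ y) :
    HasDerivAt (fun y => antiReg x y - √(1 - x ^ 2) * Real.log (x - y))
      (√(1 - y ^ 2) / (x - y)) y := by
  have hp := antiReg_pos x hx y ⟨hy.1.le, hy.2.le⟩
  have hr : 0 < 1 - y ^ 2 := by nlinarith [hy.1, hy.2]
  have hs : 0 < 1 - x ^ 2 := by nlinarith [hx.1, hx.2]
  have hr' := Real.sqrt_pos.2 hr
  have hs' := Real.sqrt_pos.2 hs
  have hr2 := Real.sq_sqrt hr.le
  have hs2 := Real.sq_sqrt hs.le
  have d1 := (hasDerivAt_arcsin (x := y) (by linarith [hy.1]) (by linarith [hy.2])).const_mul x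
  have d2 : HasDerivAt (fun y : ℝ => √(1 - y ^ 2)) (-y / √(1 - y ^ 2)) y := by
    have := ((hasDerivAt_pow 2 y).const_sub 1).sqrt hr.ne'
    refine this.congr_deriv ?_
    push_cast
    field_simp
    try norm_num
  have d3 := ((((hasDerivAt_id y).const_mul x).const_sub 1).add (d2.const_mul (√(1 - x ^ 2)))).log
    (by simpa using hp.ne')
  have hxy' : x - y ≠ 0 := sub_ne_zero.2 hxy
  have d4 := ((hasDerivAt_id y).const_sub x).log hxy'
  have := ((d1.sub d2).add (d3.const_mul (√(1 - x ^ 2)))).sub (d4.const_mul (√(1 - x ^ 2)))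
  refine (this.congr_deriv ?_)
  simp only [id, Pi.add_apply]
  set r := √(1 - y ^ 2)
  set s := √(1 - x ^ 2)
  have hp' := hp.ne'
  have e1 : (-(x * 1) + s * (-y / r)) / (1 - x * y + s * r) = s / (r * (x - y)) - 1 / (x - y) := by
    field_simp
    linear_combination s * hr2 - r * hs2
  rw [e1]
  field_simp
  linear_combination hs2 - hr2

lemma base_case (x : ℝ) (hx : x ∈ Set.Ioo (-1 : ℝ) 1) :
    Tendsto (fun ε : ℝ => ∫ y in Set.Ioo (-1 : ℝ) 1 ∩ {y : ℝ | ε < |x - y|},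
      √(1 - y ^ 2) / (x - y)) (𝓝[>] 0) (𝓝 (π * x)) := by
  have hcx : ContinuousAt (antiReg x) x :=
    (antiReg_continuousOn x hx).continuousAt (Icc_mem_nhds hx.1 hx.2)
  have t1 : Tendsto (fun ε : ℝ => antiReg x (x - ε)) (𝓝 0) (𝓝 (antiReg x x)) := by
    apply Tendsto.comp hcx
    exact (by fun_prop : Continuous fun ε : ℝ => x - ε).tendsto' 0 x (by simp)
  have t2 : Tendsto (fun ε : ℝ => antiReg x (x + ε)) (𝓝 0) (𝓝 (antiReg x x)) := by
    apply Tendsto.comp hcx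
    exact (by fun_prop : Continuous fun ε : ℝ => x + ε).tendsto' 0 x (by simp)
  have t3 := ((t1.sub t2).const_add (π * x)).mono_left (nhdsWithin_le_nhds (s := Ioi 0))
  rw [sub_self, add_zero] at t3
  refine t3.congr' ?_
  filter_upwards [eventually_small x hx] with ε hε
  obtain ⟨h0, h1, h2⟩ := hε
  have hcont : ContinuousOn (fun y => √(1 - y ^ 2) / (x - y)) {x}ᶜ := by
    apply ContinuousOn.div (by fun_prop) (by fun_prop)
    intro y hy
    exact sub_ne_zero.2 (fun h => hy h.symm)
  obtain ⟨i1, i2, e⟩ := truncated_split x ε h0 h1 h2 _ hcont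
  have hA : ∀ s : Set ℝ, s ⊆ Icc (-1) 1 → x ∉ s →
      ContinuousOn (fun y => antiReg x y - √(1 - x ^ 2) * Real.log (x - y)) s := by
    intro s hs hxs
    refine ((antiReg_continuousOn x hx).mono hs).sub (ContinuousOn.mul (by fun_prop) ?_)
    refine ContinuousOn.log (by fun_prop) (fun y hy => sub_ne_zero.2 ?_)
    rintro rfl
    exact hxs hy
  rw [e, intervalIntegral.integral_eq_sub_of_hasDerivAt_of_le (by linarith)
    (hA _ (Icc_subset_Icc_right (by linarith)) (fun h => by linarith [h.2]))
    (fun y hy => anti_hasDerivAt x hx y ⟨hy.1, by linarith [hy.2]⟩ (by linarith [hy.2] : y < x).ne')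
    i1,
    intervalIntegral.integral_eq_sub_of_hasDerivAt_of_le (by linarith)
    (hA _ (Icc_subset_Icc_left (by linarith)) (fun h => by linarith [h.1]))
    (fun y hy => anti_hasDerivAt x hx y ⟨by linarith [hy.1], hy.2⟩ (by linarith [hy.1] : x < y).ne)
    i2]
  have l1 : Real.log (x - (x - ε)) = Real.log ε := by congr 1; ring
  have l2 : Real.log (x - (x + ε)) = Real.log ε := by
    rw [← Real.log_neg_eq_log]; congr 1; ring
  have l3 : Real.log (x - 1) = Real.log (1 - x) := by
    rw [← Real.log_neg_eq_log]; congr 1; ring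
  have a1 : antiReg x 1 = x * (π / 2) + √(1 - x ^ 2) * Real.log (1 - x) := by
    simp [antiReg]
  have a2 : antiReg x (-1) = - (x * (π / 2)) + √(1 - x ^ 2) * Real.log (x - -1) := by
    simp [antiReg, add_comm]
  rw [l1, l2, l3, a1, a2]
  ring

lemma pv_unscaled (x : ℝ) (hx : x ∈ Set.Ioo (-1 : ℝ) 1) (k : ℕ) :
    Tendsto (fun ε : ℝ => ∫ y in Set.Ioo (-1 : ℝ) 1 ∩ {y : ℝ | ε < |x - y|},
      √(1 - y ^ 2) * chebU k y / (x - y)) (𝓝[>] 0) (𝓝 (π * chebT (k + 1) x)) := by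
  have hcont : ∀ k, ContinuousOn (fun y => √(1 - y ^ 2) * chebU k y / (x - y)) {x}ᶜ := by
    intro k
    apply ContinuousOn.div (continuous_weight_U k).continuousOn (by fun_prop)
    intro y hy
    exact sub_ne_zero.2 (fun h => hy h.symm)
  have hInt : ∀ k ε, 0 < ε → ε < 1 - x → ε < 1 + x →
      IntegrableOn (fun y => √(1 - y ^ 2) * chebU k y / (x - y))
        (Set.Ioo (-1 : ℝ) 1 ∩ {y : ℝ | ε < |x - y|}) := by
    intro k ε h0 h1 h2
    obtain ⟨i1, i2, -⟩ := truncated_split x ε h0 h1 h2 _ (hcont k)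
    rw [intervalIntegrable_iff_integrableOn_Icc_of_le (by linarith)] at i1 i2
    refine (i1.union i2).mono_set ?_
    rintro y ⟨⟨a, b⟩, c⟩
    rcases lt_abs.1 (show ε < |x - y| from c) with c | c
    · left; constructor <;> linarith
    · right; constructor <;> linarith
  have hInt' : ∀ k ε, IntegrableOn (fun y => √(1 - y ^ 2) * chebU k y)
        (Set.Ioo (-1 : ℝ) 1 ∩ {y : ℝ | ε < |x - y|}) := by
    intro k ε
    exact ((continuous_weight_U k).integrableOn_Icc (a := -1) (b := 1)).mono_set
      (inter_subset_left.trans Ioo_subset_Icc_self)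
  have hmeas : ∀ ε, MeasurableSet (Set.Ioo (-1 : ℝ) 1 ∩ {y : ℝ | ε < |x - y|}) := by
    intro ε
    exact measurableSet_Ioo.inter (measurableSet_lt (by fun_prop) (by fun_prop))
  have hne : ∀ ε, 0 < ε → ∀ y ∈ Set.Ioo (-1 : ℝ) 1 ∩ {y : ℝ | ε < |x - y|}, x - y ≠ 0 := by
    rintro ε h0 y ⟨-, hy⟩ h
    simp only [mem_ofPred_eq, h, abs_zero] at hy
    linarith
  have U0 : ∀ y, chebU 0 y = 1 := by intro y; simp [chebU]
  have U1 : ∀ y, chebU 1 y = 2 * y := by intro y; simp [chebU]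
  have U2 : ∀ k y, chebU (k + 2) y = 2 * y * chebU (k + 1) y - chebU k y := by
    intro k y; simp [chebU, Polynomial.Chebyshev.U_add_two]
  have T0 : ∀ y, chebT 0 y = 1 := by intro y; simp [chebT]
  have T1 : ∀ y, chebT 1 y = y := by intro y; simp [chebT]
  have T2 : ∀ k y, chebT (k + 2) y = 2 * y * chebT (k + 1) y - chebT k y := by
    intro k y; simp [chebT, Polynomial.Chebyshev.T_add_two]
  have hb := base_case x hx
  have hb0 : Tendsto (fun ε : ℝ => ∫ y in Set.Ioo (-1 : ℝ) 1 ∩ {y : ℝ | ε < |x - y|},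
      √(1 - y ^ 2) * chebU 0 y / (x - y)) (𝓝[>] 0) (𝓝 (π * chebT (0 + 1) x)) := by
    simpa only [U0, T1, mul_one, zero_add] using hb
  induction k using Nat.twoStepInduction with
  | zero => exact hb0
  | one =>
    have hm := tendsto_truncated x hx _ (continuous_weight_U 0)
    rw [weighted_U_integral, if_pos rfl] at hm
    have := (hb0.const_mul (2 * x)).sub (hm.const_mul 2)
    have e : 2 * x * (π * chebT (0 + 1) x) - 2 * (π / 2) = π * chebT (1 + 1) x := by
      have := T2 0 x
      simp only [zero_add, T0, T1] at this ⊢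
      rw [show 1 + 1 = 2 from rfl, this]; ring
    rw [e] at this
    refine this.congr' ?_
    filter_upwards [eventually_small x hx] with ε ⟨h0, h1, h2⟩
    rw [← integral_const_mul, ← integral_const_mul, ← integral_sub
      ((hInt 0 ε h0 h1 h2).const_mul _) ((hInt' 0 ε).const_mul _)]
    refine setIntegral_congr_fun (hmeas ε) (fun y hy => ?_)
    have := hne ε h0 y hy
    simp only [U0, U1]
    field_simp
    ring
  | more k ih0 ih1 =>
    have hm := tendsto_truncated x hx _ (continuous_weight_U (k + 1))
    rw [weighted_U_integral, if_neg (by omega)] at hm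
    have := ((ih1.const_mul (2 * x)).sub (hm.const_mul 2)).sub ih0
    have e : 2 * x * (π * chebT (k + 1 + 1) x) - 2 * 0 - π * chebT (k + 1) x
        = π * chebT (k + 2 + 1) x := by
      rw [show k + 2 + 1 = (k + 1) + 2 from rfl, T2 (k + 1)]; ring
    rw [e] at this
    refine this.congr' ?_
    filter_upwards [eventually_small x hx] with ε ⟨h0, h1, h2⟩
    rw [← integral_const_mul, ← integral_const_mul, ← integral_sub
      ((hInt (k + 1) ε h0 h1 h2).const_mul _) ((hInt' (k + 1) ε).const_mul _),
      ← integral_sub (f := fun y => 2 * x * (√(1 - y ^ 2) * chebU (k + 1) y / (x - y))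
          - 2 * (√(1 - y ^ 2) * chebU (k + 1) y))
        (((hInt (k + 1) ε h0 h1 h2).const_mul _).sub ((hInt' (k + 1) ε).const_mul _))
        (hInt k ε h0 h1 h2)]
    refine setIntegral_congr_fun (hmeas ε) (fun y hy => ?_)
    have := hne ε h0 y hy
    simp only [U2]
    field_simp
    ring

/-- For every `n ≥ 1` and `x ∈ (-1,1)`,
`(1/π) p.v. ∫_{-1}^{1} √(1−y²)·U_{n−1}(y)/(x−y) dy = T_n(x)`. -/
theorem chebyshev_pv_integral_second_kind (n : ℕ) (hn : 1 ≤ n)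
    (x : ℝ) (hx : x ∈ Set.Ioo (-1 : ℝ) 1) :
    Tendsto
      (fun ε : ℝ => (1 / π) *
        ∫ y in Set.Ioo (-1 : ℝ) 1 ∩ {y : ℝ | ε < |x - y|},
          Real.sqrt (1 - y ^ 2) * chebU (n - 1) y / (x - y))
      (𝓝[>] 0) (𝓝 (chebT n x)) := by
  have h := (pv_unscaled x hx (n - 1)).const_mul (1 / π)
  rw [Nat.sub_add_cancel hn] at h
  have e : 1 / π * (π * chebT n x) = chebT n x := by
    field_simp
  rwa [e] at h
end

section
/- For every x ∈ (-1,1), the principal-value integral p.v. ∫_{-1}^{1} 1 / ((x−y)·√(1−y²)) dy equals 0. Consequently, for any constant c > 0, the arcsine density u(x) = c/√(1−x²) on (-1,1) has vanishing Hilbert transform Hu(x) = 0 for all x ∈ (-1,1), so that arctan(Hu(x)/u(x)) is identically 0 on (-1,1) and u is a stationary solution of the transport equation u_t + (1/π)(arctan(Hu/u))_x = 0 on (-1,1). -/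
open MeasureTheory Real Filter Topology Set

/-- Antiderivative of `1/((x-y)√(1-y²))`. -/
noncomputable def arcG (x y : ℝ) : ℝ :=
  (1 / √(1 - x ^ 2)) * (Real.log (1 - x * y + √(1 - x ^ 2) * √(1 - y ^ 2)) - Real.log (x - y))

lemma arcN_pos {x y : ℝ} (hx : x ∈ Ioo (-1 : ℝ) 1) (hy : y ∈ Icc (-1 : ℝ) 1) :
    0 < 1 - x * y + √(1 - x ^ 2) * √(1 - y ^ 2) := by
  have h1 : 0 < 1 - x * y := by
    obtain ⟨a, b⟩ := hx
    obtain ⟨c, d⟩ := hy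
    rcases le_total 0 x with h | h <;> nlinarith
  positivity

lemma arcG_cont {x y : ℝ} (hx : x ∈ Ioo (-1 : ℝ) 1) (hy : y ∈ Icc (-1 : ℝ) 1) (hxy : x - y ≠ 0) :
    ContinuousAt (arcG x) y := by
  unfold arcG
  have h := (arcN_pos hx hy).ne'
  refine continuousAt_const.mul (ContinuousAt.sub (ContinuousAt.log ?_ h) (ContinuousAt.log ?_ hxy))
  · fun_prop
  · fun_prop

lemma arcG_deriv {x y : ℝ} (hx : x ∈ Ioo (-1 : ℝ) 1) (hy : y ∈ Ioo (-1 : ℝ) 1) (hxy : x - y ≠ 0) :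
    HasDerivAt (arcG x) (1 / ((x - y) * √(1 - y ^ 2))) y := by
  have hN := (arcN_pos hx (Ioo_subset_Icc_self hy)).ne'
  have hsx : 0 < 1 - x ^ 2 := by nlinarith [hx.1, hx.2]
  have hsy : 0 < 1 - y ^ 2 := by nlinarith [hy.1, hy.2]
  have hs := Real.sqrt_pos.2 hsx
  have hr := Real.sqrt_pos.2 hsy
  have hs2 := Real.sq_sqrt hsx.le
  have hr2 := Real.sq_sqrt hsy.le
  have d1 : HasDerivAt (fun y : ℝ => 1 - y ^ 2) (-(2 * y)) y := by
    simpa using (hasDerivAt_pow 2 y).const_sub 1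
  have d2 := (d1.sqrt hsy.ne').const_mul (√(1 - x ^ 2))
  have d3 : HasDerivAt (fun y : ℝ => 1 - x * y) (-x) y := by
    simpa using ((hasDerivAt_id y).const_mul x).const_sub 1
  have d4 : HasDerivAt (fun y : ℝ => x - y) (-1) y := by
    simpa using (hasDerivAt_id y).const_sub x
  have d5 := (((d3.add d2).log hN).sub (d4.log hxy)).const_mul (1 / √(1 - x ^ 2))
  refine d5.congr_deriv ?_
  simp only [Pi.add_apply]
  generalize √(1 - x ^ 2) = s at *
  generalize √(1 - y ^ 2) = r at *
  have e : (-x + s * (-(2 * y) / (2 * r))) / (1 - x * y + s * r) - -1 / (x - y)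
      = s / ((x - y) * r) := by
    field_simp
    have : x ^ 2 = 1 - s ^ 2 := by linarith
    have : y ^ 2 = 1 - r ^ 2 := by linarith
    grind
  rw [e]
  field_simp

lemma arcG_one {x : ℝ} : arcG x 1 = 0 := by
  unfold arcG
  have : 1 - x * 1 + √(1 - x ^ 2) * √(1 - 1 ^ 2) = -(x - 1) := by norm_num
  rw [this, Real.log_neg_eq_log]; simp

lemma arcG_neg_one {x : ℝ} : arcG x (-1) = 0 := by
  unfold arcG
  have : 1 - x * (-1) + √(1 - x ^ 2) * √(1 - (-1) ^ 2) = (x - (-1)) := by norm_num; ring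
  rw [this]; simp

lemma arc_int {x ε : ℝ} (hx : x ∈ Ioo (-1 : ℝ) 1) (h0 : 0 < ε) (h1 : ε < 1 + x) (h2 : ε < 1 - x) :
    ∫ y in Ioo (-1 : ℝ) 1 ∩ {y : ℝ | ε < |x - y|}, 1 / ((x - y) * √(1 - y ^ 2))
      = arcG x (x - ε) - arcG x (x + ε) := by
  have hset : Ioo (-1 : ℝ) 1 ∩ {y : ℝ | ε < |x - y|} = Ioo (-1) (x - ε) ∪ Ioo (x + ε) 1 := by
    ext y
    simp only [mem_inter_iff, mem_Ioo, mem_ofPred_eq, mem_union, lt_abs]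
    constructor
    · rintro ⟨⟨a, b⟩, c | c⟩
      · left; constructor <;> linarith
      · right; constructor <;> linarith
    · rintro (⟨a, b⟩ | ⟨a, b⟩)
      · exact ⟨⟨a, by linarith⟩, Or.inl (by linarith)⟩
      · exact ⟨⟨by linarith, b⟩, Or.inr (by linarith)⟩
  have cL : ContinuousOn (arcG x) (Icc (-1) (x - ε)) := fun y hy =>
    (arcG_cont hx ⟨hy.1, by linarith [hy.2]⟩ (by linarith [hy.2] : 0 < x - y).ne').continuousWithinAt
  have cR : ContinuousOn (arcG x) (Icc (x + ε) 1) := fun y hy =>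
    (arcG_cont hx ⟨by linarith [hy.1], hy.2⟩ (by linarith [hy.1] : x - y < 0).ne).continuousWithinAt
  have dL : ∀ y ∈ Ioo (-1) (x - ε), HasDerivAt (arcG x) (1 / ((x - y) * √(1 - y ^ 2))) y :=
    fun y hy => arcG_deriv hx ⟨hy.1, by linarith [hy.2]⟩ (by linarith [hy.2] : 0 < x - y).ne'
  have dR : ∀ y ∈ Ioo (x + ε) 1, HasDerivAt (arcG x) (1 / ((x - y) * √(1 - y ^ 2))) y :=
    fun y hy => arcG_deriv hx ⟨by linarith [hy.1], hy.2⟩ (by linarith [hy.1] : x - y < 0).ne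
  have iL : IntegrableOn (fun y => 1 / ((x - y) * √(1 - y ^ 2))) (Ioc (-1) (x - ε)) := by
    refine intervalIntegral.integrableOn_deriv_of_nonneg cL dL ?_
    intro y hy
    have : 0 < x - y := by linarith [hy.2]
    positivity
  have iR : IntegrableOn (fun y => 1 / ((x - y) * √(1 - y ^ 2))) (Ioc (x + ε) 1) := by
    have := intervalIntegral.integrableOn_deriv_of_nonneg cR.neg (fun y hy => (dR y hy).neg) ?_
    · simpa using this.neg
    intro y hy
    have : 0 < y - x := by linarith [hy.1]
    rw [show -(1 / ((x - y) * √(1 - y ^ 2))) = 1 / ((y - x) * √(1 - y ^ 2)) by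
      rw [← neg_sub y x, neg_mul, div_neg, neg_neg]]
    positivity
  have fL := intervalIntegral.integral_eq_sub_of_hasDerivAt_of_le (by linarith) cL dL
    ((intervalIntegrable_iff_integrableOn_Ioc_of_le (by linarith)).2 iL)
  have fR := intervalIntegral.integral_eq_sub_of_hasDerivAt_of_le (by linarith) cR dR
    ((intervalIntegrable_iff_integrableOn_Ioc_of_le (by linarith)).2 iR)
  rw [intervalIntegral.integral_of_le (by linarith), integral_Ioc_eq_integral_Ioo] at fL fR
  rw [hset, setIntegral_union _ measurableSet_Ioo (iL.mono_set Ioo_subset_Ioc_self)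
    (iR.mono_set Ioo_subset_Ioc_self), fL, fR, arcG_one, arcG_neg_one]
  · ring
  · rw [Set.disjoint_left]
    intro y hy hy'
    linarith [hy.2, hy'.1]

lemma arc_pv {x : ℝ} (hx : x ∈ Ioo (-1 : ℝ) 1) :
    Tendsto (fun ε : ℝ => ∫ y in Ioo (-1 : ℝ) 1 ∩ {y : ℝ | ε < |x - y|},
      1 / ((x - y) * √(1 - y ^ 2))) (𝓝[>] 0) (𝓝 0) := by
  have hN := (arcN_pos hx (Ioo_subset_Icc_self hx)).ne'
  have key : Tendsto (fun ε : ℝ => (1 / √(1 - x ^ 2)) *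
      (Real.log (1 - x * (x - ε) + √(1 - x ^ 2) * √(1 - (x - ε) ^ 2)) -
       Real.log (1 - x * (x + ε) + √(1 - x ^ 2) * √(1 - (x + ε) ^ 2)))) (𝓝[>] 0) (𝓝 0) := by
    have hc : ContinuousAt (fun ε : ℝ => (1 / √(1 - x ^ 2)) *
      (Real.log (1 - x * (x - ε) + √(1 - x ^ 2) * √(1 - (x - ε) ^ 2)) -
       Real.log (1 - x * (x + ε) + √(1 - x ^ 2) * √(1 - (x + ε) ^ 2)))) 0 := by
      refine continuousAt_const.mul (ContinuousAt.sub (ContinuousAt.log ?_ (by simpa using hN))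
        (ContinuousAt.log ?_ (by simpa using hN)))
      · fun_prop
      · fun_prop
    have := hc.tendsto
    simp only [sub_zero, add_zero, sub_self, mul_zero] at this
    exact this.mono_left nhdsWithin_le_nhds
  refine key.congr' ?_
  have hm : (0 : ℝ) < min (1 + x) (1 - x) := lt_min (by linarith [hx.1]) (by linarith [hx.2])
  filter_upwards [Ioo_mem_nhdsGT hm] with ε hε
  rw [arc_int hx hε.1 (hε.2.trans_le (min_le_left _ _)) (hε.2.trans_le (min_le_right _ _))]
  unfold arcG
  rw [show x - (x - ε) = ε by ring, show x - (x + ε) = -ε by ring, Real.log_neg_eq_log]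
  ring

/-- For every `x ∈ (-1,1)`, `p.v. ∫_{-1}^{1} 1/((x−y)·√(1−y²)) dy = 0`; consequently
for every `c > 0` the arcsine density `u(y) = c/√(1−y²)` on `(-1,1)` has vanishing
Hilbert transform on `(-1,1)`, `arctan(Hu/u)` is identically `0` there, and `u` is a
stationary solution of `u_t + (1/π)(arctan(Hu/u))_x = 0` on `(-1,1)`. -/
theorem arcsine_stationary_solution :
    (∀ x ∈ Set.Ioo (-1 : ℝ) 1,
      Tendsto
        (fun ε : ℝ => ∫ y in Set.Ioo (-1 : ℝ) 1 ∩ {y : ℝ | ε < |x - y|},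
            1 / ((x - y) * Real.sqrt (1 - y ^ 2)))
        (𝓝[>] 0) (𝓝 0)) ∧
    ∀ c : ℝ, 0 < c →
      ∀ x ∈ Set.Ioo (-1 : ℝ) 1,
        HasHilbertTransform
          (Set.indicator (Set.Ioo (-1 : ℝ) 1) fun y => c / Real.sqrt (1 - y ^ 2)) x 0 ∧
        Real.arctan (0 / (c / Real.sqrt (1 - x ^ 2))) = 0 ∧
        -- stationarity: `u_t + (1/π)(arctan(Hu/u))_x = 0` with `u` time-independent
        -- and `Hu = 0` on `(-1,1)`:
        ∀ t : ℝ,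
          deriv (fun _ : ℝ =>
            Set.indicator (Set.Ioo (-1 : ℝ) 1) (fun y => c / Real.sqrt (1 - y ^ 2)) x) t +
          (1 / π) * deriv (fun y => Real.arctan ((0 : ℝ) /
            Set.indicator (Set.Ioo (-1 : ℝ) 1) (fun z => c / Real.sqrt (1 - z ^ 2)) y)) x = 0 := by
  refine ⟨fun x hx => arc_pv hx, fun c hc x hx => ⟨?_, by simp, fun t => by simp⟩⟩
  unfold HasHilbertTransform
  have h := ((arc_pv hx).const_mul c).const_mul (1 / π)
  simp only [mul_zero] at h
  refine h.congr fun ε => ?_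
  congr 1
  rw [← integral_const_mul, inter_comm, ← setIntegral_indicator measurableSet_Ioo]
  congr 1
  ext y
  by_cases hy : y ∈ Ioo (-1 : ℝ) 1
  · simp only [indicator_of_mem hy]
    rw [div_div, mul_comm (√(1 - y ^ 2)), mul_one_div]
  · simp only [indicator_of_notMem hy, zero_div]
end

section
/- For every s > 0 and every x with |x| < √s, the Hilbert transform of the semicircle density u(y) = (2/π)·√(s−y²)·χ_{|y|≤√s} satisfies Hu(x) = 2x/π. -/
open MeasureTheory Real Filter Topology Set

/-- The part of the antiderivative that is regular at the singularity. -/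
noncomputable def regG (s x y : ℝ) : ℝ :=
  x * arcsin (y / √s) - √(s - y ^ 2) + √(s - x ^ 2) * log (s - x * y + √(s - x ^ 2) * √(s - y ^ 2))

/-- The antiderivative. -/
noncomputable def antF (s x y : ℝ) : ℝ := regG s x y - √(s - x ^ 2) * log (x - y)

lemma pos_aux {s x y : ℝ} (hx : |x| < √s) (hy : |y| ≤ √s) (hs : 0 < s) :
    0 < s - x * y + √(s - x ^ 2) * √(s - y ^ 2) := by
  have h1 : x * y < s := by
    have h2 : |x| * |y| ≤ |x| * √s := mul_le_mul_of_nonneg_left hy (abs_nonneg _)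
    have h3 : |x| * √s < √s * √s := mul_lt_mul_of_pos_right hx (Real.sqrt_pos.2 hs)
    rw [Real.mul_self_sqrt hs.le] at h3
    have h4 := le_abs_self (x * y)
    rw [abs_mul] at h4
    linarith
  have := mul_nonneg (Real.sqrt_nonneg (s - x ^ 2)) (Real.sqrt_nonneg (s - y ^ 2))
  linarith

lemma sq_aux {s x : ℝ} (hx : |x| < √s) (hs : 0 < s) : 0 < s - x ^ 2 := by
  have h : |x| ^ 2 < (√s) ^ 2 := pow_lt_pow_left₀ hx (abs_nonneg _) two_ne_zero
  rw [Real.sq_sqrt hs.le, sq_abs] at h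
  linarith

lemma regG_cont {s x : ℝ} (hs : 0 < s) (hx : |x| < √s) :
    ContinuousOn (regG s x) {y | |y| ≤ √s} := by
  unfold regG
  have h : ContinuousOn (fun y => log (s - x * y + √(s - x ^ 2) * √(s - y ^ 2))) {y | |y| ≤ √s} :=
    ContinuousOn.log (by fun_prop) (fun y hy => (pos_aux hx hy hs).ne')
  have h2 : Continuous (fun y => x * arcsin (y / √s) - √(s - y ^ 2)) :=
    ((Real.continuous_arcsin.comp (continuous_id.div_const _)).const_mul x).sub (by fun_prop)
  exact h2.continuousOn.add (h.const_mul _)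

lemma antF_cont {s x : ℝ} (hs : 0 < s) (hx : |x| < √s) {S : Set ℝ}
    (hS : ∀ y ∈ S, |y| ≤ √s ∧ x - y ≠ 0) : ContinuousOn (antF s x) S := by
  unfold antF
  exact ((regG_cont hs hx).mono fun y hy => (hS y hy).1).sub
    (ContinuousOn.const_mul (ContinuousOn.log (by fun_prop) fun y hy => (hS y hy).2) _)

lemma antF_deriv {s x y : ℝ} (hs : 0 < s) (hx : |x| < √s) (hy : |y| < √s) (hxy : x - y ≠ 0) :
    HasDerivAt (antF s x) (√(s - y ^ 2) / (x - y)) y := by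
  have hP := pos_aux hx hy.le hs
  have hr2 := sq_aux hy hs
  have hc2 := sq_aux hx hs
  have ha := Real.sqrt_pos.2 hs
  have hr := Real.sqrt_pos.2 hr2
  have e1 := Real.sq_sqrt hr2.le
  have e2 := Real.sq_sqrt hc2.le
  have e3 := Real.sq_sqrt hs.le
  have d0 : HasDerivAt (fun y : ℝ => s - y ^ 2) (-(2 * y)) y := by
    simpa using ((hasDerivAt_id y).pow 2).const_sub s
  have d1 : HasDerivAt (fun y : ℝ => √(s - y ^ 2)) (-(2 * y) / (2 * √(s - y ^ 2))) y :=
    d0.sqrt hr2.ne'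
  have hy' := abs_lt.1 hy
  have d2 : HasDerivAt (fun y : ℝ => arcsin (y / √s)) (1 / √(s - y ^ 2)) y := by
    have h1 : y / √s ≠ -1 := by
      intro h; rw [div_eq_iff ha.ne'] at h; linarith
    have h2 : y / √s ≠ 1 := by
      intro h; rw [div_eq_iff ha.ne'] at h; linarith
    have := (Real.hasDerivAt_arcsin h1 h2).comp y ((hasDerivAt_id y).div_const (√s))
    refine this.congr_deriv ?_
    have h3 : 1 - (y / √s) ^ 2 = (s - y ^ 2) / s := by
      rw [div_pow, e3]; field_simp
    rw [h3, Real.sqrt_div hr2.le]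
    field_simp
  have d3 : HasDerivAt (fun y : ℝ => s - x * y) (-x) y := by
    simpa using ((hasDerivAt_id y).const_mul x).const_sub s
  have d4 := (d3.add (d1.const_mul (√(s - x ^ 2)))).log hP.ne'
  have d5 : HasDerivAt (fun y : ℝ => x - y) (-1) y := by
    simpa using (hasDerivAt_id y).const_sub x
  have d6 := d5.log hxy
  have d := (((d2.const_mul x).sub d1).add (d4.const_mul (√(s - x ^ 2)))).sub
    (d6.const_mul (√(s - x ^ 2)))
  refine d.congr_deriv ?_
  simp only [Pi.add_apply]
  generalize √(s - y ^ 2) = r at *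
  generalize √(s - x ^ 2) = c at *
  have key : (-x + c * (-(2 * y) / (2 * r))) / (s - x * y + c * r) - -1 / (x - y)
      = c / (r * (x - y)) := by
    rw [div_sub_div _ _ hP.ne' hxy, div_eq_div_iff (mul_ne_zero hP.ne' hxy)
      (mul_ne_zero hr.ne' hxy)]
    field_simp
    linear_combination c * e1 - r * e2
  have : x * (1 / r) - -(2 * y) / (2 * r) + c * (c / (r * (x - y))) = r / (x - y) := by
    field_simp
    linear_combination e2 - e1
  rw [← this, ← key]
  ring

lemma antF_ftc {s x p q : ℝ} (hs : 0 < s) (hx : |x| < √s) (hp : -√s ≤ p) (hq : q ≤ √s)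
    (hpq : p ≤ q) (h : ∀ y ∈ Icc p q, x - y ≠ 0) :
    IntervalIntegrable (fun y => √(s - y ^ 2) / (x - y)) volume p q ∧
    ∫ y in p..q, √(s - y ^ 2) / (x - y) = antF s x q - antF s x p := by
  have hi : IntervalIntegrable (fun y => √(s - y ^ 2) / (x - y)) volume p q := by
    apply ContinuousOn.intervalIntegrable
    rw [uIcc_of_le hpq]
    exact ContinuousOn.div (by fun_prop) (by fun_prop) h
  refine ⟨hi, intervalIntegral.integral_eq_sub_of_hasDerivAt_of_le hpq
    (antF_cont hs hx fun y hy => ⟨abs_le.2 ⟨by linarith [hy.1], by linarith [hy.2]⟩, h y hy⟩)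
    (fun y hy => antF_deriv hs hx (abs_lt.2 ⟨by linarith [hy.1], by linarith [hy.2]⟩)
      (h y (Ioo_subset_Icc_self hy))) hi⟩

lemma antF_ends {s x : ℝ} (hs : 0 < s) (hx : |x| < √s) :
    antF s x (√s) - antF s x (-√s) = π * x := by
  have ha := Real.sqrt_pos.2 hs
  have e3 := Real.sq_sqrt hs.le
  have hx' := abs_lt.1 hx
  unfold antF regG
  rw [neg_sq, e3, sub_self, Real.sqrt_zero, mul_zero, add_zero, add_zero, neg_div,
    div_self ha.ne', Real.arcsin_neg, Real.arcsin_one]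
  have l1 : log (s - x * √s) = log (√s) + log (x - √s) := by
    rw [← Real.log_neg_eq_log (x - √s), ← Real.log_mul ha.ne' (by linarith)]
    congr 1; linear_combination -e3
  have l2 : log (s - x * -√s) = log (√s) + log (x - -√s) := by
    rw [← Real.log_mul ha.ne' (by linarith)]
    congr 1; linear_combination -e3
  rw [l1, l2]; ring

lemma integral_eval {s x ε : ℝ} (hs : 0 < s) (hx : |x| < √s) (hε : 0 < ε)
    (h1 : -√s ≤ x - ε) (h2 : x + ε ≤ √s) :
    ∫ y in {y : ℝ | ε < |x - y|},
      (Set.indicator {y : ℝ | |y| ≤ √s} fun y => (2 / π) * √(s - y ^ 2)) y / (x - y)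
      = (2 / π) * (π * x + (regG s x (x - ε) - regG s x (x + ε))) := by
  have hf : (fun y => (Set.indicator {y : ℝ | |y| ≤ √s} fun y => (2 / π) * √(s - y ^ 2)) y / (x - y))
      = Set.indicator {y : ℝ | |y| ≤ √s} (fun y => (2 / π) * (√(s - y ^ 2) / (x - y))) := by
    funext y
    by_cases hy : y ∈ {y : ℝ | |y| ≤ √s}
    · rw [indicator_of_mem hy, indicator_of_mem hy, mul_div_assoc]
    · rw [indicator_of_notMem hy, indicator_of_notMem hy, zero_div]
  have hm : MeasurableSet {y : ℝ | |y| ≤ √s} :=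
    (isClosed_le continuous_abs continuous_const).measurableSet
  have hS : {y : ℝ | ε < |x - y|} ∩ {y : ℝ | |y| ≤ √s} = Ico (-√s) (x - ε) ∪ Ioc (x + ε) (√s) := by
    ext y
    simp only [mem_inter_iff, mem_ofPred_eq, mem_union, mem_Ico, mem_Ioc, lt_abs, abs_le]
    constructor
    · rintro ⟨h | h, h3, h4⟩
      · left; constructor <;> linarith
      · right; constructor <;> linarith
    · rintro (⟨h, h3⟩ | ⟨h, h3⟩)
      · exact ⟨Or.inl (by linarith), by linarith, by linarith⟩
      · exact ⟨Or.inr (by linarith), by linarith, by linarith⟩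
  obtain ⟨i1, v1⟩ := antF_ftc hs hx le_rfl (by linarith) h1
    (fun y hy => by have := hy.2; intro h; linarith)
  obtain ⟨i2, v2⟩ := antF_ftc hs hx (by linarith) le_rfl h2
    (fun y hy => by have := hy.1; intro h; linarith)
  rw [hf, setIntegral_indicator hm, hS, integral_const_mul, setIntegral_union]
  · rw [integral_Ico_eq_integral_Ioc, ← intervalIntegral.integral_of_le h1,
      ← intervalIntegral.integral_of_le h2, v1, v2, ← antF_ends hs hx]
    have : log (x - (x + ε)) = log (x - (x - ε)) := by
      rw [← Real.log_neg_eq_log]; congr 1; ring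
    unfold antF
    rw [this]; ring
  · rw [Set.disjoint_left]
    intro y hy hy'
    linarith [hy.2, hy'.1]
  · exact measurableSet_Ioc
  · rw [integrableOn_Ico_iff_integrableOn_Ioo, ← integrableOn_Ioc_iff_integrableOn_Ioo]
    exact (intervalIntegrable_iff_integrableOn_Ioc_of_le h1).1 i1
  · exact (intervalIntegrable_iff_integrableOn_Ioc_of_le h2).1 i2

/-- For the semicircle density `u(y) = (2/π)·√(s−y²)·χ_{|y|≤√s}` and `|x| < √s`,
the Hilbert transform satisfies `Hu(x) = 2x/π`. -/
theorem hilbert_transform_semicircle (s : ℝ) (hs : 0 < s)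
    (x : ℝ) (hx : |x| < Real.sqrt s) :
    HasHilbertTransform
      (Set.indicator {y : ℝ | |y| ≤ Real.sqrt s} fun y => (2 / π) * Real.sqrt (s - y ^ 2))
      x (2 * x / π) := by
  have hx' := abs_lt.1 hx
  unfold HasHilbertTransform
  have hc : ContinuousAt (regG s x) x := (regG_cont hs hx).continuousAt
    (mem_of_superset ((isOpen_lt continuous_abs continuous_const).mem_nhds hx)
      fun y (hy : |y| < √s) => hy.le)
  have t1 : Tendsto (fun ε : ℝ => regG s x (x - ε)) (𝓝[>] 0) (𝓝 (regG s x x)) := by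
    apply hc.tendsto.comp
    have : Continuous fun ε : ℝ => x - ε := by fun_prop
    simpa using (this.tendsto 0).mono_left nhdsWithin_le_nhds
  have t2 : Tendsto (fun ε : ℝ => regG s x (x + ε)) (𝓝[>] 0) (𝓝 (regG s x x)) := by
    apply hc.tendsto.comp
    have : Continuous fun ε : ℝ => x + ε := by fun_prop
    simpa using (this.tendsto 0).mono_left nhdsWithin_le_nhds
  have t := ((((t1.sub t2).const_add (π * x)).const_mul (2 / π))).const_mul (1 / π)
  have hv : 1 / π * (2 / π * (π * x + (regG s x x - regG s x x))) = 2 * x / π := by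
    have := Real.pi_ne_zero
    rw [sub_self]; field_simp; ring
  rw [hv] at t
  refine t.congr' ?_
  have hm : 0 < min (x + √s) (√s - x) := lt_min (by linarith) (by linarith)
  filter_upwards [Ioo_mem_nhdsGT hm] with ε hε
  have m1 := min_le_left (x + √s) (√s - x)
  have m2 := min_le_right (x + √s) (√s - x)
  rw [integral_eval hs hx hε.1 (by linarith [hε.2]) (by linarith [hε.2])]
end

section
/- Fix T > 0 and define u(t,x) = (2/π)·√(T−t−x²)·χ_{|x|≤√(T−t)} for 0 ≤ t < T. Then for every t ∈ [0,T) and every x with x² < T−t, the Hilbert transform Hu(t,·)(x) exists, the function x ↦ arctan( Hu(t,·)(x) / u(t,x) ) is differentiable at x, and u satisfies the nonlocal transport equation ∂_t u(t,x) + (1/π)·∂_x [ arctan( Hu(t,·)(x) / u(t,x) ) ] = 0. -/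
open MeasureTheory Real Filter Topology Set

lemma sc_abs_lt {y a : ℝ} (h : y ^ 2 < a) : |y| < Real.sqrt a := by
  apply Real.lt_sqrt_of_sq_lt
  rwa [sq_abs]

/-- The regular part of the antiderivative. -/
noncomputable def scG (R x y : ℝ) : ℝ :=
  x * Real.arcsin (y / R) - Real.sqrt (R ^ 2 - y ^ 2)
    + Real.sqrt (R ^ 2 - x ^ 2) * Real.log (R ^ 2 - x * y + Real.sqrt (R ^ 2 - x ^ 2) * Real.sqrt (R ^ 2 - y ^ 2))

lemma sc_pos {R x y : ℝ} (hx : |x| < R) (hy : |y| ≤ R) :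
    0 < R ^ 2 - x * y + Real.sqrt (R ^ 2 - x ^ 2) * Real.sqrt (R ^ 2 - y ^ 2) := by
  have h1 : x * y ≤ |x| * |y| := by rw [← abs_mul]; exact le_abs_self _
  have h2 : 0 ≤ Real.sqrt (R ^ 2 - x ^ 2) * Real.sqrt (R ^ 2 - y ^ 2) := by positivity
  have hR : 0 < R := lt_of_le_of_lt (abs_nonneg x) hx
  nlinarith [abs_nonneg x, abs_nonneg y]

lemma scG_cont {R x : ℝ} (hx : |x| < R) : ContinuousOn (scG R x) (Icc (-R) R) := by
  unfold scG
  apply ContinuousOn.add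
  · fun_prop
  · apply ContinuousOn.mul continuousOn_const
    apply ContinuousOn.log
    · fun_prop
    · intro y hy
      exact (sc_pos hx (abs_le.2 hy)).ne'

lemma sc_deriv {R x y : ℝ} (hx : |x| < R) (hy : |y| < R) (hxy : y ≠ x) :
    HasDerivAt (fun y => scG R x y - Real.sqrt (R ^ 2 - x ^ 2) * Real.log (x - y))
      (Real.sqrt (R ^ 2 - y ^ 2) / (x - y)) y := by
  have hR : 0 < R := lt_of_le_of_lt (abs_nonneg x) hx
  have hy2 : 0 < R ^ 2 - y ^ 2 := by nlinarith [sq_lt_sq.2 (by rwa [abs_of_pos hR] : |y| < |R|)]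
  have hx2 : 0 < R ^ 2 - x ^ 2 := by nlinarith [sq_lt_sq.2 (by rwa [abs_of_pos hR] : |x| < |R|)]
  have hp := sc_pos hx hy.le
  have hs : HasDerivAt (fun y => Real.sqrt (R ^ 2 - y ^ 2)) (-y / Real.sqrt (R ^ 2 - y ^ 2)) y := by
    have h : HasDerivAt (fun y : ℝ => R ^ 2 - y ^ 2) (-(2 * y)) y := by
      simpa using ((hasDerivAt_id y).pow 2).const_sub (R ^ 2)
    convert h.sqrt hy2.ne' using 1
    have := (Real.sqrt_pos.2 hy2).ne'
    field_simp
  have ha : HasDerivAt (fun y => Real.arcsin (y / R)) (1 / Real.sqrt (R ^ 2 - y ^ 2)) y := by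
    have hb := abs_lt.1 hy
    have h1 : y / R ≠ -1 := by
      intro h; rw [div_eq_iff hR.ne'] at h; linarith
    have h2 : y / R ≠ 1 := by
      intro h; rw [div_eq_iff hR.ne'] at h; linarith
    have hc := HasDerivAt.comp (h₂ := Real.arcsin) (h := fun y => y / R) y (Real.hasDerivAt_arcsin h1 h2) ((hasDerivAt_id y).div_const R)
    refine HasDerivAt.congr_deriv hc ?_
    have : Real.sqrt (R ^ 2 - y ^ 2) = R * Real.sqrt (1 - (y / R) ^ 2) := by
      have : R ^ 2 - y ^ 2 = R ^ 2 * (1 - (y / R) ^ 2) := by field_simp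
      rw [this, Real.sqrt_mul (by positivity), Real.sqrt_sq hR.le]
    rw [this]
    simp [mul_comm]
  have hl : HasDerivAt (fun y => Real.log (x - y)) (-1 / (x - y)) y := by
    have h : HasDerivAt (fun y : ℝ => x - y) (-1) y := by
      simpa using (hasDerivAt_id y).const_sub x
    exact h.log (sub_ne_zero.2 hxy.symm)
  have hin : HasDerivAt (fun y => R ^ 2 - x * y + Real.sqrt (R ^ 2 - x ^ 2) * Real.sqrt (R ^ 2 - y ^ 2))
      (-x + Real.sqrt (R ^ 2 - x ^ 2) * (-y / Real.sqrt (R ^ 2 - y ^ 2))) y := by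
    have h : HasDerivAt (fun y : ℝ => R ^ 2 - x * y) (-x) y := by
      simpa using ((hasDerivAt_id y).const_mul x).const_sub (R ^ 2)
    exact h.add (hs.const_mul _)
  have hfin := (((ha.const_mul x).sub hs).add ((hin.log hp.ne').const_mul (Real.sqrt (R ^ 2 - x ^ 2)))).sub
    (hl.const_mul (Real.sqrt (R ^ 2 - x ^ 2)))
  refine HasDerivAt.congr_deriv hfin ?_
  have hsp := Real.sqrt_pos.2 hy2
  have hs2 := Real.sq_sqrt hy2.le
  have hw2 := Real.sq_sqrt hx2.le
  generalize Real.sqrt (R ^ 2 - y ^ 2) = s at *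
  generalize Real.sqrt (R ^ 2 - x ^ 2) = w at *
  have hd : x - y ≠ 0 := sub_ne_zero.2 hxy.symm
  have key : (-x + w * (-y / s)) / (R ^ 2 - x * y + w * s) = w / (s * (x - y)) - 1 / (x - y) := by
    rw [div_eq_iff hp.ne']
    field_simp
    linear_combination (-s) * hw2 + w * hs2
  rw [key]
  field_simp
  linear_combination hw2 - hs2

lemma sc_hilbert {R x : ℝ} (hx : |x| < R) (f : ℝ → ℝ)
    (hf : ∀ y, f y = Set.indicator {y : ℝ | |y| ≤ R} (fun y => (2 / π) * Real.sqrt (R ^ 2 - y ^ 2)) y) :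
    HasHilbertTransform f x (2 * x / π) := by
  have hR : 0 < R := lt_of_le_of_lt (abs_nonneg x) hx
  obtain ⟨hx1, hx2⟩ := abs_lt.1 hx
  unfold HasHilbertTransform
  have hcont := scG_cont hx
  have hGR : scG R x R - scG R x (-R) = π * x +
      Real.sqrt (R ^ 2 - x ^ 2) * (Real.log (x - R) - Real.log (x + R)) := by
    have e1 : R ^ 2 - x * R = R * (R - x) := by ring
    have e2 : R ^ 2 + x * R = R * (x + R) := by ring
    have e3 : Real.log (x - R) = Real.log (R - x) := by rw [← Real.log_neg_eq_log]; simp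
    unfold scG
    simp only [neg_sq, sub_self, Real.sqrt_zero, mul_zero, add_zero, mul_neg, sub_neg_eq_add,
      neg_div, div_self hR.ne', Real.arcsin_one, Real.arcsin_neg]
    rw [e1, e2, e3, Real.log_mul hR.ne' (by linarith), Real.log_mul hR.ne' (by linarith)]
    ring
  have hlim : Tendsto (fun ε : ℝ => (1 / π) * ((2 / π) * (π * x + (scG R x (x - ε) - scG R x (x + ε)))))
      (𝓝[>] 0) (𝓝 (2 * x / π)) := by
    have hc : ContinuousAt (scG R x) x := hcont.continuousAt (Icc_mem_nhds hx1 hx2)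
    have t1 : Tendsto (fun ε : ℝ => x - ε) (𝓝[>] 0) (𝓝 x) := by
      have : Tendsto (fun ε : ℝ => x - ε) (𝓝 0) (𝓝 (x - 0)) := by
        apply Continuous.tendsto; fun_prop
      rw [sub_zero] at this
      exact this.mono_left nhdsWithin_le_nhds
    have t2 : Tendsto (fun ε : ℝ => x + ε) (𝓝[>] 0) (𝓝 x) := by
      have : Tendsto (fun ε : ℝ => x + ε) (𝓝 0) (𝓝 (x + 0)) := by
        apply Continuous.tendsto; fun_prop
      rw [add_zero] at this
      exact this.mono_left nhdsWithin_le_nhds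
    have := ((((hc.tendsto.comp t1).sub (hc.tendsto.comp t2)).const_add (π * x)).const_mul
      (2 / π)).const_mul (1 / π)
    have e : 2 * x / π = 1 / π * (2 / π * (π * x + (scG R x x - scG R x x))) := by
      have := Real.pi_pos.ne'
      rw [sub_self, add_zero]
      field_simp
    rw [e]
    exact this
  refine hlim.congr' ?_
  have hev : ∀ᶠ ε : ℝ in 𝓝[>] 0, 0 < ε ∧ ε < min (x + R) (R - x) := by
    have : 0 < min (x + R) (R - x) := lt_min (by linarith) (by linarith)
    exact Ioo_mem_nhdsGT this
  filter_upwards [hev] with ε ⟨h0, hε⟩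
  have hε1 : -R < x - ε := by have := hε.trans_le (min_le_left _ _); linarith
  have hε2 : x + ε < R := by have := hε.trans_le (min_le_right _ _); linarith
  congr 1
  symm
  set g : ℝ → ℝ := fun y => Real.sqrt (R ^ 2 - y ^ 2) / (x - y) with hg
  have hpiece : ∀ a b, a ≤ b → -R ≤ a → b ≤ R → x ∉ Icc a b →
      IntegrableOn g (Icc a b) ∧ ∫ y in Icc a b, g y =
      (scG R x b - Real.sqrt (R ^ 2 - x ^ 2) * Real.log (x - b)) -
      (scG R x a - Real.sqrt (R ^ 2 - x ^ 2) * Real.log (x - a)) := by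
    intro a b hab ha hb hxab
    have hne : ∀ y ∈ Icc a b, x - y ≠ 0 := fun y hy h =>
      hxab (by rwa [sub_eq_zero.1 h])
    have hgc : ContinuousOn g (Icc a b) := by
      apply ContinuousOn.div _ _ hne <;> fun_prop
    have hgi : IntegrableOn g (Icc a b) := hgc.integrableOn_Icc
    refine ⟨hgi, ?_⟩
    rw [integral_Icc_eq_integral_Ioc, ← intervalIntegral.integral_of_le hab]
    refine intervalIntegral.integral_eq_sub_of_hasDerivAt_of_le hab
      (f := fun y => scG R x y - Real.sqrt (R ^ 2 - x ^ 2) * Real.log (x - y)) ?_ ?_ ?_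
    · apply ContinuousOn.sub (hcont.mono (Icc_subset_Icc ha hb))
      apply ContinuousOn.mul continuousOn_const
      apply ContinuousOn.log _ hne
      fun_prop
    · intro y hy
      apply sc_deriv hx (abs_lt.2 ⟨by linarith [hy.1], by linarith [hy.2]⟩)
      rintro rfl
      exact hxab ⟨hy.1.le, hy.2.le⟩
    · rw [intervalIntegrable_iff_integrableOn_Icc_of_le hab]
      exact hgi
  obtain ⟨i1, p1⟩ := hpiece (-R) (x - ε) hε1.le le_rfl (by linarith) (fun h => by linarith [h.2])
  obtain ⟨i2, p2⟩ := hpiece (x + ε) R hε2.le (by linarith) le_rfl (fun h => by linarith [h.1])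
  have hfi : (fun y => f y / (x - y)) = Set.indicator (Icc (-R) R) (fun y => (2 / π) * g y) := by
    funext y
    rw [hf]
    by_cases h : |y| ≤ R
    · rw [indicator_of_mem (by exact h), indicator_of_mem (by exact abs_le.1 h)]
      simp only [hg]; ring
    · rw [indicator_of_notMem (by exact h), indicator_of_notMem (show y ∉ Icc (-R) R from fun h' => h (abs_le.2 h'))]
      simp
  rw [hfi, setIntegral_indicator measurableSet_Icc, integral_const_mul]
  congr 1
  have hset : {y : ℝ | ε < |x - y|} ∩ Icc (-R) R = Ico (-R) (x - ε) ∪ Ioc (x + ε) R := by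
    ext y
    simp only [mem_inter_iff, mem_ofPred_eq, mem_Icc, mem_union, mem_Ico, mem_Ioc, lt_abs]
    constructor
    · rintro ⟨h | h, h1, h2⟩
      · left; constructor <;> linarith
      · right; constructor <;> linarith
    · rintro (⟨h1, h2⟩ | ⟨h1, h2⟩)
      · exact ⟨Or.inl (by linarith), by linarith, by linarith⟩
      · exact ⟨Or.inr (by linarith), by linarith, by linarith⟩
  rw [hset, setIntegral_union _ measurableSet_Ioc (i1.mono_set Ico_subset_Icc_self)
    (i2.mono_set Ioc_subset_Icc_self), ← integral_Icc_eq_integral_Ico,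
    ← integral_Icc_eq_integral_Ioc, p1, p2]
  · have l1 : x - (x - ε) = ε := by ring
    have l2 : x - (x + ε) = -ε := by ring
    rw [l1, l2, Real.log_neg_eq_log, sub_neg_eq_add]
    linear_combination hGR
  · rw [Set.disjoint_left]
    rintro y ⟨_, h⟩ ⟨h', _⟩
    linarith

/-- The semicircle family `u(t,x) = (2/π)·√(T−t−x²)·χ_{|x|≤√(T−t)}` solves the nonlocal
transport equation `u_t + (1/π)(arctan(Hu/u))_x = 0` on its support: for `t ∈ [0,T)` and
`x² < T−t`, the Hilbert transform `Hu(t,·)` exists on the support, `arctan(Hu/u)` is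
differentiable in `x`, and the equation holds. -/
theorem semicircle_solves_transport_equation (T : ℝ) (hT : 0 < T)
    (u : ℝ → ℝ → ℝ)
    (hu : ∀ t x, u t x = Set.indicator {y : ℝ | |y| ≤ Real.sqrt (T - t)}
      (fun y => (2 / π) * Real.sqrt (T - t - y ^ 2)) x)
    (t : ℝ) (ht : t ∈ Set.Ico 0 T) (x : ℝ) (hx : x ^ 2 < T - t) :
    ∃ Hu : ℝ → ℝ,
      (∀ y : ℝ, y ^ 2 < T - t → HasHilbertTransform (u t) y (Hu y)) ∧
      DifferentiableAt ℝ (fun y => Real.arctan (Hu y / u t y)) x ∧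
      ∃ ut : ℝ, HasDerivAt (fun s => u s x) ut t ∧
        ut + (1 / π) * deriv (fun y => Real.arctan (Hu y / u t y)) x = 0 := by
  obtain ⟨S, hS⟩ : ∃ S, S = T - t := ⟨_, rfl⟩
  have hSpos : 0 < S := by rw [hS]; linarith [ht.2]
  have hRR : Real.sqrt S ^ 2 = S := Real.sq_sqrt hSpos.le
  have hin : ∀ s y, y ^ 2 < T - s → u s y = (2 / π) * Real.sqrt (T - s - y ^ 2) := by
    intro s y h
    rw [hu, indicator_of_mem]
    exact (sc_abs_lt h).le
  have hpi := Real.pi_pos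
  have hq : 0 < T - t - x ^ 2 := by linarith
  have hsq := Real.sqrt_pos.2 hq
  have hsq2 := Real.sq_sqrt hq.le
  have hder : HasDerivAt (fun y => Real.arctan (2 * y / π / u t y))
      (1 / Real.sqrt (T - t - x ^ 2)) x := by
    have hin' : HasDerivAt (fun y : ℝ => T - t - y ^ 2) (-(2 * x)) x := by
      simpa using ((hasDerivAt_id x).pow 2).const_sub (T - t)
    have h1 := (((hasDerivAt_id x).div (hin'.sqrt hq.ne') hsq.ne').arctan)
    have h2 : (fun y => Real.arctan (2 * y / π / u t y)) =ᶠ[𝓝 x]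
        (fun y => Real.arctan (y / Real.sqrt (T - t - y ^ 2))) := by
      have : ∀ᶠ y in 𝓝 x, y ^ 2 < T - t := by
        exact ContinuousAt.eventually_lt (f := fun y : ℝ => y ^ 2) (g := fun _ => T - t) (by fun_prop) (by fun_prop) hx
      filter_upwards [this] with y hy
      have hp := Real.sqrt_pos.2 (by linarith : 0 < T - t - y ^ 2)
      rw [hin t y hy]
      congr 1
      field_simp
    refine (HasDerivAt.congr_deriv h1 ?_).congr_of_eventuallyEq h2
    simp only [Pi.div_apply, id]
    generalize Real.sqrt (T - t - x ^ 2) = s at *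
    have : 1 + (x / s) ^ 2 = (T - t) / s ^ 2 := by
      field_simp
      linear_combination hsq2
    rw [this]
    have : T - t ≠ 0 := by linarith [ht.2]
    field_simp
    linear_combination hsq2
  refine ⟨fun y => 2 * y / π, ?_, hder.differentiableAt,
    -(1 / π) * (1 / Real.sqrt (T - t - x ^ 2)), ?_, ?_⟩
  · intro y hy
    apply sc_hilbert (sc_abs_lt hy)
    intro z
    rw [hu, ← hS, hRR]
  · have h1 : HasDerivAt (fun s : ℝ => T - s - x ^ 2) (-1) t := by
      simpa using ((hasDerivAt_id t).const_sub T).sub_const (x ^ 2)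
    have h2 := (h1.sqrt hq.ne').const_mul (2 / π)
    have h3 : (fun s => u s x) =ᶠ[𝓝 t] (fun s => 2 / π * Real.sqrt (T - s - x ^ 2)) := by
      have : ∀ᶠ s in 𝓝 t, x ^ 2 < T - s := by
        exact ContinuousAt.eventually_lt (f := fun _ : ℝ => x ^ 2) (g := fun s => T - s) (by fun_prop) (by fun_prop) hx
      filter_upwards [this] with s hs
      exact hin s x hs
    refine (HasDerivAt.congr_deriv h2 ?_).congr_of_eventuallyEq h3
    field_simp
  · rw [hder.deriv]
    ring
end

section
/- For every c ≥ 0, set x_− = (√(c+1) − 1)² and x_+ = (√(c+1) + 1)², and let v(c,y) = √((x_+−y)(y−x_−)) / (2πy) for y ∈ (x_−, x_+), extended by 0 outside. Then for every x ∈ (x_−, x_+), the Hilbert transform of v(c,·) satisfies Hv(c,·)(x) = (x − c)/(2πx). -/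
open MeasureTheory Real Filter Topology Set

/-- Left edge `x_− = (√(c+1) − 1)²` of the Marchenko–Pastur distribution. -/
noncomputable def mpXm (c : ℝ) : ℝ := (Real.sqrt (c + 1) - 1) ^ 2

/-- Right edge `x_+ = (√(c+1) + 1)²` of the Marchenko–Pastur distribution. -/
noncomputable def mpXp (c : ℝ) : ℝ := (Real.sqrt (c + 1) + 1) ^ 2

/-- Marchenko–Pastur density `v(c,y) = √((x_+−y)(y−x_−))/(2πy)` on `(x_−, x_+)`,
extended by `0` outside. -/
noncomputable def mpDensity (c : ℝ) (y : ℝ) : ℝ :=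
  Set.indicator (Set.Ioo (mpXm c) (mpXp c))
    (fun z => Real.sqrt ((mpXp c - z) * (z - mpXm c)) / (2 * π * z)) y

section aux

/-- square-root weight -/
noncomputable def mpS (a b y : ℝ) : ℝ := Real.sqrt ((b - y) * (y - a))

noncomputable def mpN (a b x y : ℝ) : ℝ := ((x - a) * (b - y) + (b - x) * (y - a)) / 2

/-- regular part of the antiderivative -/
noncomputable def mpA (a b c x y : ℝ) : ℝ :=
  Real.arcsin ((2 * y - a - b) / (b - a))
  - c / x * Real.arcsin (((a + b) * y - 2 * (a * b)) / ((b - a) * y))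
  + mpS a b x / x * Real.log (mpN a b x y + mpS a b x * mpS a b y)

noncomputable def mpG (a b c x y : ℝ) : ℝ :=
  mpA a b c x y - mpS a b x / x * Real.log (x - y)

lemma mpS_pos {a b y : ℝ} (h1 : a < y) (h2 : y < b) : 0 < mpS a b y :=
  Real.sqrt_pos.2 (mul_pos (by linarith) (by linarith))

lemma mpS_sq {a b y : ℝ} (h1 : a ≤ y) (h2 : y ≤ b) : mpS a b y ^ 2 = (b - y) * (y - a) :=
  Real.sq_sqrt (mul_nonneg (by linarith) (by linarith))

lemma mpN_pos {a b x y : ℝ} (hx1 : a < x) (hx2 : x < b) (h1 : a ≤ y) (h2 : y ≤ b) :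
    0 < mpN a b x y := by
  unfold mpN
  have h3 : 0 ≤ (x - a) * (b - y) := mul_nonneg (by linarith) (by linarith)
  have h4 : 0 ≤ (b - x) * (y - a) := mul_nonneg (by linarith) (by linarith)
  rcases lt_or_eq_of_le h1 with h | h
  · have : 0 < (b - x) * (y - a) := mul_pos (by linarith) (by linarith)
    linarith
  · have : 0 < (x - a) * (b - y) := mul_pos (by linarith) (by linarith)
    linarith

lemma mpS_hasDerivAt {a b y : ℝ} (h1 : a < y) (h2 : y < b) :
    HasDerivAt (mpS a b) ((a + b - 2 * y) / (2 * mpS a b y)) y := by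
  have h : HasDerivAt (fun y : ℝ => (b - y) * (y - a)) (a + b - 2 * y) y := by
    have := ((hasDerivAt_id y).const_sub b).mul ((hasDerivAt_id y).sub_const a)
    refine this.congr_deriv ?_
    simp only [id]
    ring
  exact h.sqrt (mul_pos (by linarith) (by linarith)).ne'

lemma arc1_deriv {a b y : ℝ} (h1 : a < y) (h2 : y < b) :
    HasDerivAt (fun y => Real.arcsin ((2 * y - a - b) / (b - a))) (1 / mpS a b y) y := by
  have hab : 0 < b - a := by linarith
  have hu : HasDerivAt (fun y : ℝ => (2 * y - a - b) / (b - a)) (2 / (b - a)) y := by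
    have := ((((hasDerivAt_id y).const_mul 2).sub_const a).sub_const b).div_const (b - a)
    simpa using this
  have hS := mpS_pos h1 h2
  have hsq := mpS_sq h1.le h2.le
  have e : Real.sqrt (1 - ((2 * y - a - b) / (b - a)) ^ 2) = 2 * mpS a b y / (b - a) := by
    rw [Real.sqrt_eq_iff_mul_self_eq_of_pos (by positivity)]
    field_simp
    rw [hsq]; ring
  have n1 : (2 * y - a - b) / (b - a) ≠ -1 := by
    intro h; rw [div_eq_iff hab.ne'] at h; linarith
  have n2 : (2 * y - a - b) / (b - a) ≠ 1 := by
    intro h; rw [div_eq_iff hab.ne'] at h; linarith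
  have := (Real.hasDerivAt_arcsin n1 n2).comp y hu
  refine this.congr_deriv ?_
  rw [e]; field_simp

lemma arc2_deriv {a b c y : ℝ} (ha : 0 ≤ a) (hc : 0 < c) (hcc : c ^ 2 = a * b)
    (h1 : a < y) (h2 : y < b) :
    HasDerivAt (fun y => Real.arcsin (((a + b) * y - 2 * (a * b)) / ((b - a) * y)))
      (c / (y * mpS a b y)) y := by
  have hab : 0 < b - a := by linarith
  have hy : 0 < y := by linarith
  have hb : 0 < b := by linarith
  have hapos : 0 < a := by
    rcases lt_or_eq_of_le ha with h | h
    · exact h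
    · rw [← h] at hcc; nlinarith
  have hS := mpS_pos h1 h2
  have hsq := mpS_sq h1.le h2.le
  have hu : HasDerivAt (fun y : ℝ => ((a + b) * y - 2 * (a * b)) / ((b - a) * y))
      (2 * c ^ 2 / ((b - a) * y ^ 2)) y := by
    have := (((hasDerivAt_id y).const_mul (a + b)).sub_const (2 * (a * b))).div
      ((hasDerivAt_id y).const_mul (b - a)) (by simp only [id]; positivity)
    refine this.congr_deriv ?_
    simp only [id]
    rw [hcc]; field_simp; ring
  have e : Real.sqrt (1 - (((a + b) * y - 2 * (a * b)) / ((b - a) * y)) ^ 2)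
      = 2 * c * mpS a b y / ((b - a) * y) := by
    rw [Real.sqrt_eq_iff_mul_self_eq_of_pos (by positivity)]
    field_simp
    rw [hsq, hcc]; ring
  have hp : 0 < (b - a) * y := by positivity
  have n1 : ((a + b) * y - 2 * (a * b)) / ((b - a) * y) ≠ -1 := by
    intro h; rw [div_eq_iff hp.ne'] at h
    have : b * (y - a) = 0 := by linarith
    have : 0 < b * (y - a) := mul_pos hb (by linarith)
    linarith
  have n2 : ((a + b) * y - 2 * (a * b)) / ((b - a) * y) ≠ 1 := by
    intro h; rw [div_eq_iff hp.ne'] at h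
    have : a * (b - y) = 0 := by linarith
    have : 0 < a * (b - y) := mul_pos hapos (by linarith)
    linarith
  have := (Real.hasDerivAt_arcsin n1 n2).comp y hu
  refine this.congr_deriv ?_
  rw [e]; field_simp

lemma log_deriv {a b x y : ℝ} (hx1 : a < x) (hx2 : x < b) (h1 : a < y) (h2 : y < b)
    (hxy : x - y ≠ 0) :
    HasDerivAt (fun y => Real.log (mpN a b x y + mpS a b x * mpS a b y) - Real.log (x - y))
      (mpS a b x / ((x - y) * mpS a b y)) y := by
  have hN := mpN_pos hx1 hx2 h1.le h2.le
  have hS := mpS_pos h1 h2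
  have hT := mpS_pos hx1 hx2
  have hsq := mpS_sq h1.le h2.le
  have htq := mpS_sq hx1.le hx2.le
  have hNd : HasDerivAt (fun y : ℝ => mpN a b x y) ((a + b) / 2 - x) y := by
    unfold mpN
    have := ((((hasDerivAt_id y).const_sub b).const_mul (x - a)).add
      (((hasDerivAt_id y).sub_const a).const_mul (b - x))).div_const 2
    refine this.congr_deriv ?_
    ring
  have hpos : 0 < mpN a b x y + mpS a b x * mpS a b y := by positivity
  have := ((hNd.add ((mpS_hasDerivAt h1 h2).const_mul (mpS a b x))).log hpos.ne').sub
    (((hasDerivAt_id y).const_sub x).log hxy)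
  refine this.congr_deriv ?_
  simp only [id]
  have hNe : mpN a b x y = ((x - a) * (b - y) + (b - x) * (y - a)) / 2 := rfl
  simp only [Pi.add_apply]
  generalize mpS a b x = t at *
  generalize mpS a b y = s at *
  rw [hNe] at *
  clear this hNd
  have k : s * (x - y) * ((a + b) / 2 - x + t * ((a + b - 2 * y) / (2 * s)))
      + s * (((x - a) * (b - y) + (b - x) * (y - a)) / 2 + t * s)
      = t * (((x - a) * (b - y) + (b - x) * (y - a)) / 2 + t * s) := by
    field_simp
    linear_combination (2 * t) * hsq - (2 * s) * htq
  generalize (a + b) / 2 - x + t * ((a + b - 2 * y) / (2 * s)) = u at *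
  generalize ((x - a) * (b - y) + (b - x) * (y - a)) / 2 + t * s = v at *
  have hv := hpos.ne'
  field_simp
  linear_combination k

lemma mpG_deriv {a b c x y : ℝ} (ha : 0 ≤ a) (hc : 0 ≤ c) (hcc : c ^ 2 = a * b)
    (hx1 : a < x) (hx2 : x < b) (h1 : a < y) (h2 : y < b) (hxy : x - y ≠ 0) :
    HasDerivAt (mpG a b c x) (mpS a b y / (y * (x - y))) y := by
  have hS := mpS_pos h1 h2
  have hsq := mpS_sq h1.le h2.le
  have htq := mpS_sq hx1.le hx2.le
  have hy : 0 < y := by linarith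
  have hx : 0 < x := by linarith
  have d2 : HasDerivAt (fun y => c / x * Real.arcsin (((a + b) * y - 2 * (a * b)) / ((b - a) * y)))
      (c / x * (c / (y * mpS a b y))) y := by
    rcases lt_or_eq_of_le hc with h | h
    · exact (arc2_deriv ha h hcc h1 h2).const_mul _
    · subst h; simpa using hasDerivAt_const y (0 : ℝ)
  have := ((arc1_deriv h1 h2).sub d2).add
    ((log_deriv hx1 hx2 h1 h2 hxy).const_mul (mpS a b x / x))
  have e : mpG a b c x = ((fun y => Real.arcsin ((2 * y - a - b) / (b - a))) -
      fun y => c / x * Real.arcsin (((a + b) * y - 2 * (a * b)) / ((b - a) * y))) +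
      fun y => mpS a b x / x *
        (Real.log (mpN a b x y + mpS a b x * mpS a b y) - Real.log (x - y)) := by
    funext z
    simp only [mpG, mpA, Pi.add_apply, Pi.sub_apply]
    ring
  rw [e]
  refine this.congr_deriv ?_
  field_simp
  rw [hsq, htq, hcc]
  ring

lemma mpA_cont {a b c x y : ℝ} (ha : 0 ≤ a) (hc : 0 ≤ c) (hcc : c ^ 2 = a * b)
    (hx1 : a < x) (hx2 : x < b) (h1 : a ≤ y) (h2 : y ≤ b) : 
    ContinuousAt (mpA a b c x) y := by
  have hN := mpN_pos hx1 hx2 h1 h2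
  have hT := mpS_pos hx1 hx2
  have hS0 : 0 ≤ mpS a b y := Real.sqrt_nonneg _
  have hab : b - a ≠ 0 := by linarith
  have c1 : ContinuousAt (fun y => Real.arcsin ((2 * y - a - b) / (b - a))) y := by
    apply Continuous.continuousAt; fun_prop
  have c2 : ContinuousAt (fun y => c / x *
      Real.arcsin (((a + b) * y - 2 * (a * b)) / ((b - a) * y))) y := by
    rcases lt_or_eq_of_le hc with h | h
    · have hapos : 0 < a := by
        rcases lt_or_eq_of_le ha with h | h
        · exact h
        · rw [← h] at hcc; nlinarith
      have hy : y ≠ 0 := by linarith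
      refine continuousAt_const.mul (Real.continuous_arcsin.continuousAt.comp ?_)
      exact ContinuousAt.div (by fun_prop) (by fun_prop) (mul_ne_zero hab hy)
    · subst h; simpa using continuousAt_const
  have c3 : ContinuousAt (fun y => mpS a b x / x *
      Real.log (mpN a b x y + mpS a b x * mpS a b y)) y := by
    refine continuousAt_const.mul (ContinuousAt.log ?_ (by positivity))
    have : Continuous (fun y => mpN a b x y + mpS a b x * mpS a b y) := by
      unfold mpN mpS; fun_prop
    exact this.continuousAt
  exact (c1.sub c2).add c3

lemma mpG_cont {a b c x y : ℝ} (ha : 0 ≤ a) (hc : 0 ≤ c) (hcc : c ^ 2 = a * b)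
    (hx1 : a < x) (hx2 : x < b) (h1 : a ≤ y) (h2 : y ≤ b) (hxy : x - y ≠ 0) : 
    ContinuousAt (mpG a b c x) y := 
  (mpA_cont ha hc hcc hx1 hx2 h1 h2).sub
    (continuousAt_const.mul (ContinuousAt.log (by fun_prop) hxy))

lemma mpG_ends {a b c x : ℝ} (ha : 0 ≤ a) (hc : 0 ≤ c) (hcc : c ^ 2 = a * b)
    (hx1 : a < x) (hx2 : x < b) : mpG a b c x b - mpG a b c x a = π * (x - c) / x := by
  have hab : b - a ≠ 0 := by linarith
  have hb : b ≠ 0 := by linarith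
  have hx : x ≠ 0 := by linarith
  have hxa : x - a ≠ 0 := by linarith
  have hxb : x - b ≠ 0 := by linarith
  have hxb' : b - x ≠ 0 := by linarith
  have e1 : (2 * b - a - b) / (b - a) = 1 := by rw [div_eq_iff hab]; ring
  have e2 : (2 * a - a - b) / (b - a) = -1 := by rw [div_eq_iff hab]; ring
  have s1 : mpS a b b = 0 := by simp [mpS]
  have s2 : mpS a b a = 0 := by simp [mpS]
  have n1 : mpN a b x b = (b - a) / 2 * (b - x) := by unfold mpN; ring
  have n2 : mpN a b x a = (b - a) / 2 * (x - a) := by unfold mpN; ring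
  have l1 : Real.log (x - b) = Real.log (b - x) := by rw [← Real.log_neg_eq_log]; ring_nf
  have e3 : c / x * Real.arcsin (((a + b) * b - 2 * (a * b)) / ((b - a) * b)) = c / x * (π / 2) := by
    rw [show ((a + b) * b - 2 * (a * b)) / ((b - a) * b) = 1 by
      rw [div_eq_iff (mul_ne_zero hab hb)]; ring, Real.arcsin_one]
  have e4 : c / x * Real.arcsin (((a + b) * a - 2 * (a * b)) / ((b - a) * a))
      = c / x * (-(π / 2)) := by
    by_cases h : a = 0
    · have : c = 0 := by rw [h] at hcc; simpa using hcc
      simp [this]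
    · rw [show ((a + b) * a - 2 * (a * b)) / ((b - a) * a) = -1 by
        rw [div_eq_iff (mul_ne_zero hab h)]; ring, Real.arcsin_neg_one]
  unfold mpG mpA
  rw [e1, e2, e3, e4, s1, s2, n1, n2, l1, mul_zero, add_zero, add_zero,
    Real.log_mul (by positivity) hxb', Real.log_mul (by positivity) hxa, Real.arcsin_one,
    Real.arcsin_neg_one]
  field_simp
  ring

lemma left_int {a b c x ε : ℝ} (ha : 0 ≤ a) (hc : 0 ≤ c) (hcc : c ^ 2 = a * b)
    (hx1 : a < x) (hx2 : x < b) (he : 0 < ε) (hea : ε < x - a) :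
    IntegrableOn (fun y => mpS a b y / (y * (x - y))) (Ioc a (x - ε)) ∧
    ∫ y in Ioc a (x - ε), mpS a b y / (y * (x - y)) = mpG a b c x (x - ε) - mpG a b c x a := by
  have hle : a ≤ x - ε := by linarith
  have hcont : ContinuousOn (mpG a b c x) (Icc a (x - ε)) := fun y hy =>
    (mpG_cont ha hc hcc hx1 hx2 hy.1 (by linarith [hy.2]) (by linarith [hy.2])).continuousWithinAt
  have hd : ∀ y ∈ Ioo a (x - ε), HasDerivAt (mpG a b c x) (mpS a b y / (y * (x - y))) y :=
    fun y hy => mpG_deriv ha hc hcc hx1 hx2 hy.1 (by linarith [hy.2]) (by linarith [hy.2])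
  have hi : IntegrableOn (fun y => mpS a b y / (y * (x - y))) (Ioc a (x - ε)) :=
    intervalIntegral.integrableOn_deriv_of_nonneg hcont hd (fun y hy =>
      div_nonneg (Real.sqrt_nonneg _) (mul_nonneg (by linarith [hy.1]) (by linarith [hy.2])))
  refine ⟨hi, ?_⟩
  rw [← intervalIntegral.integral_of_le hle]
  exact intervalIntegral.integral_eq_sub_of_hasDerivAt_of_le hle hcont hd
    ((intervalIntegrable_iff_integrableOn_Ioc_of_le hle).2 hi)

lemma right_int {a b c x ε : ℝ} (ha : 0 ≤ a) (hc : 0 ≤ c) (hcc : c ^ 2 = a * b)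
    (hx1 : a < x) (hx2 : x < b) (he : 0 < ε) (heb : ε < b - x) :
    IntegrableOn (fun y => mpS a b y / (y * (x - y))) (Ioc (x + ε) b) ∧
    ∫ y in Ioc (x + ε) b, mpS a b y / (y * (x - y)) = mpG a b c x b - mpG a b c x (x + ε) := by
  have hle : x + ε ≤ b := by linarith
  have hcont : ContinuousOn (mpG a b c x) (Icc (x + ε) b) := fun y hy =>
    (mpG_cont ha hc hcc hx1 hx2 (by linarith [hy.1]) hy.2 (by linarith [hy.1])).continuousWithinAt
  have hd : ∀ y ∈ Ioo (x + ε) b, HasDerivAt (mpG a b c x) (mpS a b y / (y * (x - y))) y :=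
    fun y hy => mpG_deriv ha hc hcc hx1 hx2 (by linarith [hy.1]) hy.2 (by linarith [hy.1])
  have hi' : IntegrableOn (fun y => -(mpS a b y / (y * (x - y)))) (Ioc (x + ε) b) :=
    intervalIntegral.integrableOn_deriv_of_nonneg hcont.neg (fun y hy => (hd y hy).neg) (fun y hy =>
      neg_nonneg.2 (div_nonpos_of_nonneg_of_nonpos (Real.sqrt_nonneg _)
        (mul_nonpos_of_nonneg_of_nonpos (by linarith [hy.1]) (by linarith [hy.1]))))
  have hi : IntegrableOn (fun y => mpS a b y / (y * (x - y))) (Ioc (x + ε) b) := by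
    simpa using hi'.neg
  refine ⟨hi, ?_⟩
  rw [← intervalIntegral.integral_of_le hle]
  exact intervalIntegral.integral_eq_sub_of_hasDerivAt_of_le hle hcont hd
    ((intervalIntegrable_iff_integrableOn_Ioc_of_le hle).2 hi)

lemma mp_integral {a b c x ε : ℝ} (ha : 0 ≤ a) (hc : 0 ≤ c) (hcc : c ^ 2 = a * b)
    (hx1 : a < x) (hx2 : x < b) (he : 0 < ε) (hea : ε < x - a) (heb : ε < b - x) :
    ∫ y in {y : ℝ | ε < |x - y|}, (Set.indicator (Set.Ioo a b)
      (fun z => Real.sqrt ((b - z) * (z - a)) / (2 * π * z)) y) / (x - y)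
    = 1 / (2 * π) * (π * (x - c) / x + (mpA a b c x (x - ε) - mpA a b c x (x + ε))) := by
  obtain ⟨i1, v1⟩ := left_int ha hc hcc hx1 hx2 he hea
  obtain ⟨i2, v2⟩ := right_int ha hc hcc hx1 hx2 he heb
  have e : (fun y => (Set.indicator (Set.Ioo a b)
      (fun z => Real.sqrt ((b - z) * (z - a)) / (2 * π * z)) y) / (x - y)) =
      Set.indicator (Set.Ioo a b) (fun y => 1 / (2 * π) * (mpS a b y / (y * (x - y)))) := by
    funext y
    by_cases h : y ∈ Set.Ioo a b
    · simp only [Set.indicator_of_mem h, mpS]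
      rw [div_div, div_mul_div_comm]
      ring_nf
    · simp [Set.indicator_of_notMem h]
  have hset : {y : ℝ | ε < |x - y|} ∩ Ioo a b = Ioo a (x - ε) ∪ Ioo (x + ε) b := by
    ext y
    simp only [mem_inter_iff, mem_setOf_eq, mem_Ioo, mem_union, lt_abs]
    constructor
    · rintro ⟨h | h, h3, h4⟩
      · left; constructor <;> linarith
      · right; constructor <;> linarith
    · rintro (⟨h, h'⟩ | ⟨h, h'⟩)
      · exact ⟨Or.inl (by linarith), h, by linarith⟩
      · exact ⟨Or.inr (by linarith), by linarith, h'⟩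
  rw [e, setIntegral_indicator measurableSet_Ioo, hset, integral_const_mul,
    setIntegral_union ?_ measurableSet_Ioo (i1.mono_set Ioo_subset_Ioc_self)
      (i2.mono_set Ioo_subset_Ioc_self), ← integral_Ioc_eq_integral_Ioo,
      ← integral_Ioc_eq_integral_Ioo, v1, v2, ← mpG_ends ha hc hcc hx1 hx2]
  · congr 1
    have : Real.log (x - (x + ε)) = Real.log (x - (x - ε)) := by
      rw [← Real.log_neg_eq_log]; ring_nf
    have h : ∀ y, mpG a b c x y = mpA a b c x y - mpS a b x / x * Real.log (x - y) := fun _ => rfl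
    rw [h (x - ε), h (x + ε), this]
    ring
  · rw [Set.disjoint_left]
    rintro y ⟨_, h⟩ ⟨h', _⟩
    linarith

end aux

/-- For every `c ≥ 0` and `x ∈ (x_−, x_+)`, the Hilbert transform of the
Marchenko–Pastur density satisfies `Hv(c,·)(x) = (x − c)/(2πx)`. -/
theorem hilbert_transform_marchenko_pastur (c : ℝ) (hc : 0 ≤ c)
    (x : ℝ) (hx : x ∈ Set.Ioo (mpXm c) (mpXp c)) :
    HasHilbertTransform (mpDensity c) x ((x - c) / (2 * π * x)) := by
  obtain ⟨hx1, hx2⟩ := hx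
  have ha : 0 ≤ mpXm c := sq_nonneg _
  have hcc : c ^ 2 = mpXm c * mpXp c := by
    have h : Real.sqrt (c + 1) ^ 2 = c + 1 := Real.sq_sqrt (by linarith)
    unfold mpXm mpXp
    rw [← mul_pow, show (Real.sqrt (c + 1) - 1) * (Real.sqrt (c + 1) + 1)
      = Real.sqrt (c + 1) ^ 2 - 1 by ring, h]
    ring
  unfold HasHilbertTransform mpDensity
  generalize mpXm c = a at *
  generalize mpXp c = b at *
  have hxpos : 0 < x := by linarith
  have hA := mpA_cont ha hc hcc hx1 hx2 hx1.le hx2.le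
  have t1 : Tendsto (fun ε : ℝ => mpA a b c x (x - ε)) (𝓝 0) (𝓝 (mpA a b c x x)) := by
    refine hA.tendsto.comp ?_
    exact Continuous.tendsto' (by fun_prop) _ _ (by simp)
  have t2 : Tendsto (fun ε : ℝ => mpA a b c x (x + ε)) (𝓝 0) (𝓝 (mpA a b c x x)) := by
    refine hA.tendsto.comp ?_
    exact Continuous.tendsto' (by fun_prop) _ _ (by simp)
  have t3 := (((t1.sub t2).const_add (π * (x - c) / x)).const_mul (1 / (2 * π))).const_mul (1 / π)
  have t4 := t3.mono_left (nhdsWithin_le_nhds (s := Ioi 0))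
  have e : 1 / π * (1 / (2 * π) * (π * (x - c) / x + (mpA a b c x x - mpA a b c x x)))
      = (x - c) / (2 * π * x) := by
    rw [sub_self, add_zero]; field_simp
  rw [e] at t4
  refine t4.congr' ?_
  have hm : 0 < min (x - a) (b - x) := lt_min (by linarith) (by linarith)
  filter_upwards [Ioo_mem_nhdsGT hm] with ε hε
  have h1 := lt_min_iff.1 hε.2
  rw [mp_integral ha hc hcc hx1 hx2 hε.1 h1.1 h1.2]
end

section
/- Fix c ≥ 0 and for 0 ≤ t < 1 define u_c(t,x) = v( (c+t)/(1−t), x/(1−t) ), where v(c',y) = √((x_+(c')−y)(y−x_−(c')))/(2πy)·χ_{(x_−(c'),x_+(c'))}(y) with x_±(c') = (√(c'+1) ± 1)². Then for every t ∈ [0,1) and every x in the support of u_c(t,·), i.e. every x with 2(2+c−t)x − (c+t)² − x² > 0, the time derivative satisfies ∂_t u_c(t,x) = − (c+t+x) / ( 2πx·√( 2(2+c−t)x − (c+t)² − x² ) ). -/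
open MeasureTheory Real Filter Topology Set

/-- For the Marchenko–Pastur family `u_c(t,x) = v((c+t)/(1−t), x/(1−t))`, at every
`t ∈ [0,1)` and every `x` in the support (i.e. `2(2+c−t)x − (c+t)² − x² > 0`), the time
derivative satisfies `∂_t u_c(t,x) = −(c+t+x)/(2πx·√(2(2+c−t)x − (c+t)² − x²))`. -/
theorem marchenko_pastur_time_derivative (c : ℝ) (hc : 0 ≤ c)
    (t : ℝ) (ht : t ∈ Set.Ico (0 : ℝ) 1) (x : ℝ)
    (hx : 0 < 2 * (2 + c - t) * x - (c + t) ^ 2 - x ^ 2) :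
    HasDerivAt (fun s : ℝ => mpDensity ((c + s) / (1 - s)) (x / (1 - s)))
      (-((c + t + x) /
        (2 * π * x * Real.sqrt (2 * (2 + c - t) * x - (c + t) ^ 2 - x ^ 2)))) t := by
  have ht1 : t < 1 := ht.2
  have hxpos : 0 < x := by
    by_contra h
    push Not at h
    nlinarith [sq_nonneg (c + t), sq_nonneg x]
  have hP : HasDerivAt (fun s : ℝ => 2 * (2 + c - s) * x - (c + s) ^ 2 - x ^ 2)
      (-2 * x - 2 * (c + t)) t := by
    have h1 : HasDerivAt (fun s : ℝ => s) 1 t := hasDerivAt_id t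
    have h2 := ((((h1.const_sub (2 + c)).const_mul 2).mul_const x).sub
      ((h1.const_add c).pow 2)).sub_const (x ^ 2)
    refine h2.congr_deriv ?_
    norm_num
  have hD := (hP.sqrt hx.ne').div_const (2 * π * x)
  have hpos : ∀ᶠ s in 𝓝 t, 0 < 2 * (2 + c - s) * x - (c + s) ^ 2 - x ^ 2 :=
    hP.continuousAt.eventually (lt_mem_nhds hx)
  have hev : (fun s : ℝ => mpDensity ((c + s) / (1 - s)) (x / (1 - s))) =ᶠ[𝓝 t]
      (fun s : ℝ => √(2 * (2 + c - s) * x - (c + s) ^ 2 - x ^ 2) / (2 * π * x)) := by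
    filter_upwards [hpos, gt_mem_nhds ht1] with s hs hs1
    have h1s : 0 < 1 - s := by linarith
    have hC : (c + s) / (1 - s) + 1 = (c + 1) / (1 - s) := by
      field_simp
      ring
    have hC0 : 0 ≤ (c + s) / (1 - s) + 1 := by
      rw [hC]
      positivity
    have hr := Real.sq_sqrt hC0
    have hr0 := Real.sqrt_nonneg ((c + s) / (1 - s) + 1)
    have key : (mpXp ((c + s) / (1 - s)) - x / (1 - s)) * (x / (1 - s) - mpXm ((c + s) / (1 - s)))
        = (2 * (2 + c - s) * x - (c + s) ^ 2 - x ^ 2) / (1 - s) ^ 2 := by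
      have e : (2 * (2 + c - s) * x - (c + s) ^ 2 - x ^ 2) / (1 - s) ^ 2
          = 2 * ((c + s) / (1 - s) + 2) * (x / (1 - s)) - ((c + s) / (1 - s)) ^ 2
            - (x / (1 - s)) ^ 2 := by
        field_simp
        ring
      rw [e]
      unfold mpXp mpXm
      generalize (c + s) / (1 - s) = C at hr
      generalize x / (1 - s) = y
      generalize √(C + 1) = r at hr
      have : C = r ^ 2 - 1 := by linarith
      subst this
      ring
    have hkpos : 0 < (mpXp ((c + s) / (1 - s)) - x / (1 - s)) *
        (x / (1 - s) - mpXm ((c + s) / (1 - s))) := by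
      rw [key]
      positivity
    have hle : mpXm ((c + s) / (1 - s)) ≤ mpXp ((c + s) / (1 - s)) := by
      unfold mpXp mpXm
      nlinarith
    have hmem : x / (1 - s) ∈ Set.Ioo (mpXm ((c + s) / (1 - s))) (mpXp ((c + s) / (1 - s))) := by
      rcases mul_pos_iff.1 hkpos with h | h
      · exact ⟨by linarith [h.2], by linarith [h.1]⟩
      · exfalso
        linarith [h.1, h.2]
    show mpDensity _ _ = _
    unfold mpDensity
    rw [Set.indicator_of_mem hmem, key, Real.sqrt_div' _ (sq_nonneg _), Real.sqrt_sq h1s.le]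
    have := Real.pi_pos
    field_simp
  refine (hD.congr_of_eventuallyEq hev).congr_deriv ?_
  have hs := Real.sqrt_pos.2 hx
  have := Real.pi_pos
  field_simp
  ring
end

section
/- Fix c ≥ 0 and for 0 ≤ t < 1 define u_c(t,x) = v( (c+t)/(1−t), x/(1−t) ), where v(c',y) = √((x_+(c')−y)(y−x_−(c')))/(2πy)·χ_{(x_−(c'),x_+(c'))}(y) with x_±(c') = (√(c'+1) ± 1)². Then for every t ∈ [0,1) and every x with 2(2+c−t)x − (c+t)² − x² > 0, the Hilbert transform Hu_c(t,·)(x) exists and (1/π)·∂_x [ arctan( Hu_c(t,·)(x) / u_c(t,x) ) ] = (c+t+x) / ( 2πx·√( 2(2+c−t)x − (c+t)² − x² ) ). -/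
open MeasureTheory Real Filter Topology Set

lemma mp_r_deriv {a b y : ℝ} (h1 : a < y) (h2 : y < b) :
    HasDerivAt (fun y => √((y - a) / (b - y))) ((b - a) / (2 * √((y - a) / (b - y)) * (b - y) ^ 2)) y := by
  have hby : b - y ≠ 0 := by linarith
  have hpos : 0 < (y - a) / (b - y) := div_pos (by linarith) (by linarith)
  have h := (HasDerivAt.fun_div ((hasDerivAt_id' y).sub_const a) ((hasDerivAt_id' y).const_sub b) hby).sqrt hpos.ne'
  have hr : √((y - a) / (b - y)) ≠ 0 := (Real.sqrt_pos.2 hpos).ne'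
  convert h using 1
  field_simp
  ring

lemma mp_w_deriv {a b y : ℝ} (h1 : a < y) (h2 : y < b) :
    HasDerivAt (fun y => √((b - y) / (y - a))) (-(b - a) / (2 * √((b - y) / (y - a)) * (y - a) ^ 2)) y := by
  have hby : y - a ≠ 0 := by linarith
  have hpos : 0 < (b - y) / (y - a) := div_pos (by linarith) (by linarith)
  have h := (HasDerivAt.fun_div ((hasDerivAt_id' y).const_sub b) ((hasDerivAt_id' y).sub_const a) hby).sqrt hpos.ne'
  have hr : √((b - y) / (y - a)) ≠ 0 := (Real.sqrt_pos.2 hpos).ne'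
  convert h using 1
  field_simp
  ring

lemma mp_q_eq_r {a b y : ℝ} (h2 : y < b) :
    √((b - y) * (y - a)) = √((y - a) / (b - y)) * (b - y) := by
  have h : (b - y) * (y - a) = ((y - a) / (b - y)) * (b - y) ^ 2 := by
    have : b - y ≠ 0 := by linarith
    field_simp
  rw [h, Real.sqrt_mul' _ (sq_nonneg _), Real.sqrt_sq (by linarith)]

lemma mp_q_eq_w {a b y : ℝ} (h2 : a < y) :
    √((b - y) * (y - a)) = √((b - y) / (y - a)) * (y - a) := by
  have h : (b - y) * (y - a) = ((b - y) / (y - a)) * (y - a) ^ 2 := by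
    have : y - a ≠ 0 := by linarith
    field_simp
  rw [h, Real.sqrt_mul' _ (sq_nonneg _), Real.sqrt_sq (by linarith)]

/-- Left antiderivative. -/
noncomputable def mpFL (a b k x y : ℝ) : ℝ :=
  2 * arctan (√((y - a) / (b - y))) - 2 * (k / x) * arctan ((b / k) * √((y - a) / (b - y)))
   + √((x - a) / (b - x)) * (b - x) / x *
     (2 * log (√((x - a) / (b - x)) + √((y - a) / (b - y))) - log (x - y) + log (b - y))

/-- Right antiderivative. -/
noncomputable def mpFR (a b k x y : ℝ) : ℝ :=
  -2 * arctan (√((b - y) / (y - a))) + 2 * (k / x) * arctan ((k / b) * √((b - y) / (y - a)))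
   + √((x - a) / (b - x)) * (b - x) / x *
     (2 * log (1 + √((x - a) / (b - x)) * √((b - y) / (y - a))) - log (y - x) + log (y - a))

lemma mpFL_deriv {a b k x y : ℝ} (ha : 0 ≤ a) (hk : 0 ≤ k) (hkk : k ^ 2 = a * b)
    (h1 : a < y) (h2 : y < x) (h3 : x < b) :
    HasDerivAt (mpFL a b k x) (√((b - y) * (y - a)) / (y * (x - y))) y := by
  have hyb : y < b := h2.trans h3
  have hr := mp_r_deriv h1 hyb
  have hpos : 0 < √((y - a) / (b - y)) :=
    Real.sqrt_pos.2 (div_pos (by linarith) (by linarith))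
  have hpos0 : 0 < √((x - a) / (b - x)) :=
    Real.sqrt_pos.2 (div_pos (by linarith) (by linarith))
  have hsq : √((y - a) / (b - y)) ^ 2 * (b - y) = y - a := by
    rw [Real.sq_sqrt (div_pos (by linarith) (by linarith)).le]
    have : b - y ≠ 0 := by linarith
    field_simp
  have hsq0 : √((x - a) / (b - x)) ^ 2 * (b - x) = x - a := by
    rw [Real.sq_sqrt (div_pos (by linarith) (by linarith)).le]
    have : b - x ≠ 0 := by linarith
    field_simp
  have hq := mp_q_eq_r (a := a) hyb
  have hA := hr.arctan.const_mul 2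
  have hB := ((hr.const_mul (b / k)).arctan).const_mul (2 * (k / x))
  have hC := (((((hr.const_add (√((x - a) / (b - x)))).log (by positivity)).const_mul 2).sub
    (((hasDerivAt_id y).const_sub x).log (by simp only [id]; linarith))).add
    (((hasDerivAt_id y).const_sub b).log (by simp only [id]; linarith))).const_mul (√((x - a) / (b - x)) * (b - x) / x)
  refine ((hA.sub hB).add hC).congr_deriv ?_
  rw [hq]
  simp only [id]
  generalize √((y - a) / (b - y)) = r at *
  generalize √((x - a) / (b - x)) = s at *
  have hy0 : 0 < y := by linarith
  have hx0 : 0 < x := by linarith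
  have e1 : 0 < b - y := by linarith
  have e2 : 0 < x - y := by linarith
  have e3 : 0 < b - x := by linarith
  have e4 : 0 < b - a := by linarith
  have hb : 0 < b := by linarith
  have hA' : 2 * (1 / (1 + r ^ 2) * ((b - a) / (2 * r * (b - y) ^ 2))) = 1 / (r * (b - y)) := by
    have : 1 + r ^ 2 = (b - a) / (b - y) := by field_simp; linarith
    rw [this]; field_simp
  have hB' : 2 * (k / x) * (1 / (1 + (b / k * r) ^ 2) * (b / k * ((b - a) / (2 * r * (b - y) ^ 2))))
      = a * b / (x * y * (r * (b - y))) := by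
    rcases hk.eq_or_lt with h | h
    · rw [← h] at hkk ⊢
      rw [← hkk]; simp
    · have : 1 + (b / k * r) ^ 2 = b * y * (b - a) / (k ^ 2 * (b - y)) := by
        field_simp
        rw [hkk]
        linear_combination b ^ 2 * hsq
      rw [this]; field_simp; linarith
  have hC' : s * (b - x) / x * (2 * ((b - a) / (2 * r * (b - y) ^ 2) / (s + r)) - -1 / (x - y) + -1 / (b - y))
      = (b - x) * (x - a) / (x * (x - y) * (r * (b - y))) := by
    have hd : (s - r) * (s + r) = (b - a) * (x - y) / ((b - x) * (b - y)) := by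
      field_simp
      linear_combination (b - y) * hsq0 - (b - x) * hsq
    have hd' : 1 / (s + r) = (s - r) * ((b - x) * (b - y)) / ((b - a) * (x - y)) := by
      field_simp
      field_simp at hd
      linear_combination -hd
    rw [div_eq_mul_one_div _ (s + r), hd', ← hsq0]
    field_simp
    ring
  rw [hA', hB', hC']
  field_simp
  linear_combination (-x) * (b - y) *hsq

lemma mpFR_deriv {a b k x y : ℝ} (ha : 0 ≤ a) (hk : 0 ≤ k) (hkk : k ^ 2 = a * b)
    (h1 : a < x) (h2 : x < y) (h3 : y < b) :
    HasDerivAt (mpFR a b k x) (√((b - y) * (y - a)) / (y * (x - y))) y := by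
  have hay : a < y := h1.trans h2
  have hr := mp_w_deriv hay h3
  have hpos : 0 < √((b - y) / (y - a)) :=
    Real.sqrt_pos.2 (div_pos (by linarith) (by linarith))
  have hpos0 : 0 < √((x - a) / (b - x)) :=
    Real.sqrt_pos.2 (div_pos (by linarith) (by linarith))
  have hsq : √((b - y) / (y - a)) ^ 2 * (y - a) = b - y := by
    rw [Real.sq_sqrt (div_pos (by linarith) (by linarith)).le]
    have : y - a ≠ 0 := by linarith
    field_simp
  have hsq0 : √((x - a) / (b - x)) ^ 2 * (b - x) = x - a := by
    rw [Real.sq_sqrt (div_pos (by linarith) (by linarith)).le]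
    have : b - x ≠ 0 := by linarith
    field_simp
  have hq := mp_q_eq_w (b := b) hay
  have hA := hr.arctan.const_mul (-2)
  have hB := ((hr.const_mul (k / b)).arctan).const_mul (2 * (k / x))
  have hC := ((((((hr.const_mul (√((x - a) / (b - x)))).const_add 1).log (by positivity)).const_mul 2).sub
    (((hasDerivAt_id y).sub_const x).log (by simp only [id]; linarith))).add
    (((hasDerivAt_id y).sub_const a).log (by simp only [id]; linarith))).const_mul (√((x - a) / (b - x)) * (b - x) / x)
  refine ((hA.add hB).add hC).congr_deriv ?_
  rw [hq]
  simp only [id]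
  generalize √((b - y) / (y - a)) = r at *
  generalize √((x - a) / (b - x)) = s at *
  have hy0 : 0 < y := by linarith
  have hx0 : 0 < x := by linarith
  have e1 : 0 < y - a := by linarith
  have e2 : 0 < y - x := by linarith
  have e2' : x - y ≠ 0 := by linarith
  have e3 : 0 < b - x := by linarith
  have e4 : 0 < b - a := by linarith
  have hb : 0 < b := by linarith
  have hA' : -2 * (1 / (1 + r ^ 2) * (-(b - a) / (2 * r * (y - a) ^ 2))) = 1 / (r * (y - a)) := by
    have : 1 + r ^ 2 = (b - a) / (y - a) := by field_simp; linarith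
    rw [this]; field_simp
  have hB' : 2 * (k / x) * (1 / (1 + (k / b * r) ^ 2) * (k / b * (-(b - a) / (2 * r * (y - a) ^ 2))))
      = - (a * b / (x * y * (r * (y - a)))) := by
    have : 1 + (k / b * r) ^ 2 = y * (b - a) / (b * (y - a)) := by
      have : (k / b * r) ^ 2 = a * r ^ 2 / b := by
        field_simp
        rw [hkk]; ring
      rw [this]
      field_simp
      linear_combination a * hsq
    rw [this]; field_simp; linarith
  have hC' : s * (b - x) / x * (2 * (s * (-(b - a) / (2 * r * (y - a) ^ 2)) / (1 + s * r)) - 1 / (y - x) + 1 / (y - a))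
      = -((b - x) * (x - a) / (x * (y - x) * (r * (y - a)))) := by
    have hd : (1 - s * r) * (1 + s * r) * ((b - x) * (y - a)) = (b - a) * (y - x) := by
      linear_combination (- (r ^ 2 * (y - a))) * hsq0 - (x - a) * hsq
    have hd' : 1 / (1 + s * r) = (1 - s * r) * ((b - x) * (y - a)) / ((b - a) * (y - x)) := by
      field_simp
      linear_combination -hd
    rw [div_eq_mul_one_div _ (1 + s * r), hd', ← hsq0]
    field_simp
    linear_combination r * hsq0
  rw [hA', hB', hC']
  have e5 : x - y = - (y - x) := by ring
  rw [e5]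
  field_simp
  linear_combination x * (y - a) * hsq

/-- The left antiderivative without its singular part. -/
noncomputable def mpPL (a b k x y : ℝ) : ℝ :=
  2 * arctan (√((y - a) / (b - y))) - 2 * (k / x) * arctan ((b / k) * √((y - a) / (b - y)))
   + √((x - a) / (b - x)) * (b - x) / x *
     (2 * log (√((x - a) / (b - x)) + √((y - a) / (b - y))) + log (b - y))

/-- The right antiderivative without its singular part. -/
noncomputable def mpPR (a b k x y : ℝ) : ℝ :=
  -2 * arctan (√((b - y) / (y - a))) + 2 * (k / x) * arctan ((k / b) * √((b - y) / (y - a)))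
   + √((x - a) / (b - x)) * (b - x) / x *
     (2 * log (1 + √((x - a) / (b - x)) * √((b - y) / (y - a))) + log (y - a))

lemma mpPL_cont {a b k x y : ℝ} (h1 : a < x) (h2 : x < b) (h3 : y < b) :
    ContinuousAt (mpPL a b k x) y := by
  have hpos0 : 0 < √((x - a) / (b - x)) :=
    Real.sqrt_pos.2 (div_pos (by linarith) (by linarith))
  have hr : ContinuousAt (fun y => √((y - a) / (b - y))) y := by
    refine ContinuousAt.sqrt (ContinuousAt.div (by fun_prop) (by fun_prop) (by linarith))
  have hp : √((x - a) / (b - x)) + √((y - a) / (b - y)) ≠ 0 := by positivity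
  have hb : b - y ≠ 0 := by linarith
  unfold mpPL
  have hA : ContinuousAt (fun y => arctan (√((y - a) / (b - y)))) y :=
    continuous_arctan.continuousAt.comp hr
  have hB : ContinuousAt (fun y => arctan ((b / k) * √((y - a) / (b - y)))) y :=
    ContinuousAt.comp (g := arctan) continuous_arctan.continuousAt (continuousAt_const.mul hr)
  have hC := ((continuousAt_const (y := √((x - a) / (b - x)))).add hr).log hp
  have hD : ContinuousAt (fun y => log (b - y)) y := ContinuousAt.log (by fun_prop) hb
  exact ((continuousAt_const.mul hA).sub (continuousAt_const.mul hB)).add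
    (continuousAt_const.mul ((continuousAt_const.mul hC).add hD))

lemma mpPR_cont {a b k x y : ℝ} (h3 : a < y) :
    ContinuousAt (mpPR a b k x) y := by
  have hr : ContinuousAt (fun y => √((b - y) / (y - a))) y := by
    refine ContinuousAt.sqrt (ContinuousAt.div (by fun_prop) (by fun_prop) (by linarith))
  have hp : 1 + √((x - a) / (b - x)) * √((b - y) / (y - a)) ≠ 0 := by positivity
  have hb : y - a ≠ 0 := by linarith
  unfold mpPR
  have hA : ContinuousAt (fun y => arctan (√((b - y) / (y - a)))) y :=
    continuous_arctan.continuousAt.comp hr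
  have hB : ContinuousAt (fun y => arctan ((k / b) * √((b - y) / (y - a)))) y :=
    ContinuousAt.comp (g := arctan) continuous_arctan.continuousAt (continuousAt_const.mul hr)
  have hC := ((continuousAt_const (y := (1 : ℝ))).add
    ((continuousAt_const (y := √((x - a) / (b - x)))).mul hr)).log hp
  have hD : ContinuousAt (fun y => log (y - a)) y := ContinuousAt.log (by fun_prop) hb
  exact ((continuousAt_const.mul hA).add (continuousAt_const.mul hB)).add
    (continuousAt_const.mul ((continuousAt_const.mul hC).add hD))

lemma mpFL_eq (a b k x y : ℝ) : mpFL a b k x y =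
    mpPL a b k x y - √((x - a) / (b - x)) * (b - x) / x * log (x - y) := by
  unfold mpFL mpPL; ring

lemma mpFR_eq (a b k x y : ℝ) : mpFR a b k x y =
    mpPR a b k x y - √((x - a) / (b - x)) * (b - x) / x * log (y - x) := by
  unfold mpFR mpPR; ring

lemma mp_left {a b k x m : ℝ} (ha : 0 ≤ a) (hk : 0 ≤ k) (hkk : k ^ 2 = a * b)
    (h1 : a < m) (h2 : m < x) (h3 : x < b) :
    IntegrableOn (fun y => √((b - y) * (y - a)) / (y * (x - y))) (Ioo a m) ∧
    ∫ y in Ioo a m, √((b - y) * (y - a)) / (y * (x - y)) = mpFL a b k x m - mpFL a b k x a := by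
  have hc : ContinuousOn (mpFL a b k x) (Icc a m) := by
    intro y hy
    apply ContinuousAt.continuousWithinAt
    have : mpFL a b k x = _ := funext (mpFL_eq a b k x)
    rw [this]
    exact (mpPL_cont (by linarith) h3 (by linarith [hy.2])).sub (continuousAt_const.mul
      (ContinuousAt.log (by fun_prop) (by linarith [hy.2])))
  have hd : ∀ y ∈ Ioo a m, HasDerivAt (mpFL a b k x) (√((b - y) * (y - a)) / (y * (x - y))) y :=
    fun y hy => mpFL_deriv ha hk hkk hy.1 (hy.2.trans h2) h3
  have hi := intervalIntegral.integrableOn_deriv_of_nonneg hc hd (fun y hy =>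
    div_nonneg (sqrt_nonneg _) (mul_nonneg (by linarith [hy.1]) (by linarith [hy.2])))
  refine ⟨hi.mono_set Ioo_subset_Ioc_self, ?_⟩
  rw [← integral_Ioc_eq_integral_Ioo, ← intervalIntegral.integral_of_le h1.le]
  exact intervalIntegral.integral_eq_sub_of_hasDerivAt_of_le h1.le hc hd
    ((intervalIntegrable_iff_integrableOn_Ioc_of_le h1.le).2 hi)

lemma mp_right {a b k x m : ℝ} (ha : 0 ≤ a) (hk : 0 ≤ k) (hkk : k ^ 2 = a * b)
    (h1 : a < x) (h2 : x < m) (h3 : m < b) :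
    IntegrableOn (fun y => √((b - y) * (y - a)) / (y * (x - y))) (Ioo m b) ∧
    ∫ y in Ioo m b, √((b - y) * (y - a)) / (y * (x - y)) = mpFR a b k x b - mpFR a b k x m := by
  have hc : ContinuousOn (mpFR a b k x) (Icc m b) := by
    intro y hy
    apply ContinuousAt.continuousWithinAt
    have : mpFR a b k x = _ := funext (mpFR_eq a b k x)
    rw [this]
    exact (mpPR_cont (by linarith [hy.1])).sub (continuousAt_const.mul
      (ContinuousAt.log (by fun_prop) (by linarith [hy.1])))
  have hd : ∀ y ∈ Ioo m b, HasDerivAt (mpFR a b k x) (√((b - y) * (y - a)) / (y * (x - y))) y :=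
    fun y hy => mpFR_deriv ha hk hkk h1 (h2.trans hy.1) hy.2
  have hi : IntegrableOn (fun y => √((b - y) * (y - a)) / (y * (x - y))) (Icc m b) := by
    apply ContinuousOn.integrableOn_Icc
    apply ContinuousOn.div (by fun_prop) (by fun_prop)
    intro y hy
    exact mul_ne_zero (by linarith [hy.1]) (by linarith [hy.1])
  refine ⟨hi.mono_set Ioo_subset_Icc_self, ?_⟩
  rw [← integral_Ioc_eq_integral_Ioo, ← intervalIntegral.integral_of_le h3.le]
  exact intervalIntegral.integral_eq_sub_of_hasDerivAt_of_le h3.le hc hd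
    ((intervalIntegrable_iff_integrableOn_Ioc_of_le h3.le).2 (hi.mono_set Ioc_subset_Icc_self))

lemma mp_value {a b k x : ℝ} (ha : 0 ≤ a) (hk : 0 ≤ k)
    (h1 : a < x) (h2 : x < b) :
    mpPL a b k x x - mpPR a b k x x + mpFR a b k x b - mpFL a b k x a = π * (x - k) / x := by
  have hx0 : 0 < x := by linarith
  have hb : 0 < b := by linarith
  have e1 : 0 < x - a := by linarith
  have e2 : 0 < b - x := by linarith
  have hpos0 : 0 < √((x - a) / (b - x)) := Real.sqrt_pos.2 (div_pos e1 e2)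
  have hinv : √((b - x) / (x - a)) = (√((x - a) / (b - x)))⁻¹ := by
    rw [← Real.sqrt_inv, inv_div]
  unfold mpPL mpPR mpFL mpFR
  rw [hinv]
  simp only [sub_self, zero_div, sqrt_zero, mul_zero, arctan_zero, add_zero, log_one]
  generalize √((x - a) / (b - x)) = s at *
  rw [mul_inv_cancel₀ hpos0.ne', Real.arctan_inv_of_pos hpos0, ← two_mul,
    Real.log_mul two_ne_zero hpos0.ne', one_add_one_eq_two]
  have hB : k * arctan (k / b * s⁻¹) = k * (π / 2 - arctan (b / k * s)) := by
    rcases hk.eq_or_lt with h | h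
    · rw [← h]; simp
    · rw [← Real.arctan_inv_of_pos (by positivity), mul_inv, inv_div]
  generalize arctan (k / b * s⁻¹) = u at *
  generalize arctan (b / k * s) = v at *
  field_simp
  linear_combination (-2) * hB

lemma mp_hilbert {a b k x : ℝ} (ha : 0 ≤ a) (hk : 0 ≤ k) (hkk : k ^ 2 = a * b)
    (h1 : a < x) (h2 : x < b) :
    HasHilbertTransform ((Ioo a b).indicator fun z => √((b - z) * (z - a)) / (2 * π * z)) x
      ((x - k) / (2 * π * x)) := by
  unfold HasHilbertTransform
  have hx0 : 0 < x := by linarith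
  have hlim : Tendsto (fun ε : ℝ => 1 / π * (1 / (2 * π) * (mpPL a b k x (x - ε) - mpPR a b k x (x + ε)
      + mpFR a b k x b - mpFL a b k x a))) (𝓝[>] 0) (𝓝 ((x - k) / (2 * π * x))) := by
    have hL : Tendsto (fun ε : ℝ => mpPL a b k x (x - ε)) (𝓝[>] 0) (𝓝 (mpPL a b k x x)) := by
      refine (mpPL_cont (k := k) h1 h2 h2).tendsto.comp (tendsto_nhdsWithin_of_tendsto_nhds ?_)
      have : ContinuousAt (fun ε : ℝ => x - ε) 0 := by fun_prop
      simpa [ContinuousAt] using this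
    have hR : Tendsto (fun ε : ℝ => mpPR a b k x (x + ε)) (𝓝[>] 0) (𝓝 (mpPR a b k x x)) := by
      refine (mpPR_cont (k := k) (b := b) (x := x) h1).tendsto.comp (tendsto_nhdsWithin_of_tendsto_nhds ?_)
      have : ContinuousAt (fun ε : ℝ => x + ε) 0 := by fun_prop
      simpa [ContinuousAt] using this
    have := ((((hL.sub hR).add_const (mpFR a b k x b)).sub_const (mpFL a b k x a)).const_mul
      (1 / (2 * π))).const_mul (1 / π)
    rw [mp_value ha hk h1 h2] at this
    convert this using 2
    field_simp
  refine hlim.congr' ?_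
  have hsmall : ∀ᶠ ε : ℝ in 𝓝[>] 0, ε < min (x - a) (b - x) :=
    nhdsWithin_le_nhds (eventually_lt_nhds (lt_min (by linarith) (by linarith)))
  filter_upwards [hsmall, self_mem_nhdsWithin] with ε hε hε0
  have hε0 : 0 < ε := hε0
  have hεa := hε.trans_le (min_le_left _ _)
  have hεb := hε.trans_le (min_le_right _ _)
  have hfun : (fun y => (Ioo a b).indicator (fun z => √((b - z) * (z - a)) / (2 * π * z)) y / (x - y))
      = (Ioo a b).indicator (fun y => 1 / (2 * π) * (√((b - y) * (y - a)) / (y * (x - y)))) := by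
    ext y
    by_cases hy : y ∈ Ioo a b
    · simp only [indicator_of_mem hy]
      simp only [div_eq_mul_inv, mul_inv]; ring
    · simp [indicator_of_notMem hy]
  have hset : {y : ℝ | ε < |x - y|} ∩ Ioo a b = Ioo a (x - ε) ∪ Ioo (x + ε) b := by
    ext y
    simp only [mem_inter_iff, mem_ofPred_eq, mem_Ioo, mem_union, lt_abs]
    constructor
    · rintro ⟨h | h, h3, h4⟩
      · left; constructor <;> linarith
      · right; constructor <;> linarith
    · rintro (⟨h3, h4⟩ | ⟨h3, h4⟩)
      · exact ⟨Or.inl (by linarith), by linarith, by linarith⟩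
      · exact ⟨Or.inr (by linarith), by linarith, by linarith⟩
  obtain ⟨iL, vL⟩ := mp_left (m := x - ε) ha hk hkk (by linarith) (by linarith) h2
  obtain ⟨iR, vR⟩ := mp_right (m := x + ε) ha hk hkk h1 (by linarith) (by linarith)
  rw [hfun, setIntegral_indicator measurableSet_Ioo, hset, integral_const_mul,
    setIntegral_union _ measurableSet_Ioo iL iR, vL, vR, mpFL_eq a b k x (x - ε),
    mpFR_eq a b k x (x + ε)]
  · have e1 : x - (x - ε) = ε := by ring
    have e2 : x + ε - x = ε := by ring
    rw [e1, e2]; ring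
  · rw [Set.disjoint_left]
    intro y hy hy'
    linarith [hy.2, hy'.1]

/-- For the Marchenko–Pastur family `u_c(t,x) = v((c+t)/(1−t), x/(1−t))`, at every
`t ∈ [0,1)` and every `x` with `2(2+c−t)x − (c+t)² − x² > 0`, the Hilbert transform
`Hu_c(t,·)` exists on the support and
`(1/π)·∂_x[arctan(Hu_c(t,·)/u_c(t,·))](x) = (c+t+x)/(2πx·√(2(2+c−t)x − (c+t)² − x²))`. -/
theorem marchenko_pastur_flux_derivative (c : ℝ) (hc : 0 ≤ c)
    (t : ℝ) (ht : t ∈ Set.Ico (0 : ℝ) 1) (x : ℝ)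
    (hx : 0 < 2 * (2 + c - t) * x - (c + t) ^ 2 - x ^ 2) :
    ∃ Hu : ℝ → ℝ,
      (∀ y : ℝ, 0 < 2 * (2 + c - t) * y - (c + t) ^ 2 - y ^ 2 →
        HasHilbertTransform (fun z => mpDensity ((c + t) / (1 - t)) (z / (1 - t))) y (Hu y)) ∧
      HasDerivAt (fun y => (1 / π) *
          Real.arctan (Hu y / mpDensity ((c + t) / (1 - t)) (y / (1 - t))))
        ((c + t + x) /
          (2 * π * x * Real.sqrt (2 * (2 + c - t) * x - (c + t) ^ 2 - x ^ 2))) x := by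
  obtain ⟨ht0, ht1⟩ := ht
  have hs : 0 < 1 - t := by linarith
  obtain ⟨a, ha⟩ : ∃ a, a = (1 - t) * mpXm ((c + t) / (1 - t)) := ⟨_, rfl⟩
  obtain ⟨b, hb⟩ : ∃ b, b = (1 - t) * mpXp ((c + t) / (1 - t)) := ⟨_, rfl⟩
  have hsq : √((c + t) / (1 - t) + 1) ^ 2 = (c + t) / (1 - t) + 1 :=
    Real.sq_sqrt (add_nonneg (div_nonneg (by linarith) hs.le) zero_le_one)
  have hmul : (1 - t) * √((c + t) / (1 - t) + 1) ^ 2 = c + 1 := by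
    rw [hsq]; field_simp; ring
  have ha0 : 0 ≤ a := by rw [ha]; exact mul_nonneg hs.le (sq_nonneg _)
  have hsum : a + b = 2 * (2 + c - t) := by
    rw [ha, hb, mpXm, mpXp]; linear_combination 2 * hmul
  have hprod : (c + t) ^ 2 = a * b := by
    rw [ha, hb, mpXm, mpXp]
    linear_combination (-(1 - t) * √((c + t) / (1 - t) + 1) ^ 2 - (c + 1) + 2 * (1 - t)) * hmul
  have hab : a ≤ b := by
    rw [ha, hb, mpXm, mpXp]
    apply mul_le_mul_of_nonneg_left _ hs.le
    nlinarith [Real.sqrt_nonneg ((c + t) / (1 - t) + 1)]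
  have hR : ∀ y, 2 * (2 + c - t) * y - (c + t) ^ 2 - y ^ 2 = (b - y) * (y - a) := by
    intro y; rw [← hsum, hprod]; ring
  have hmem : ∀ y, 0 < 2 * (2 + c - t) * y - (c + t) ^ 2 - y ^ 2 → a < y ∧ y < b := by
    intro y hy
    rw [hR] at hy
    constructor
    · by_contra h
      push Not at h
      nlinarith
    · by_contra h
      push Not at h
      nlinarith
  have hdens : (fun z => mpDensity ((c + t) / (1 - t)) (z / (1 - t))) =
      (Ioo a b).indicator fun z => √((b - z) * (z - a)) / (2 * π * z) := by
    have hm : mpXm ((c + t) / (1 - t)) = a / (1 - t) := by rw [ha]; field_simp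
    have hp : mpXp ((c + t) / (1 - t)) = b / (1 - t) := by rw [hb]; field_simp
    ext z
    unfold mpDensity
    rw [hm, hp]
    by_cases hz : z ∈ Ioo a b
    · have hz' : z / (1 - t) ∈ Ioo (a / (1 - t)) (b / (1 - t)) :=
        ⟨div_lt_div_of_pos_right hz.1 hs, div_lt_div_of_pos_right hz.2 hs⟩
      rw [indicator_of_mem hz, indicator_of_mem hz']
      have : (b / (1 - t) - z / (1 - t)) * (z / (1 - t) - a / (1 - t))
          = ((b - z) * (z - a)) / (1 - t) ^ 2 := by field_simp
      rw [this, Real.sqrt_div' _ (sq_nonneg _), Real.sqrt_sq hs.le]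
      have : 0 < z := by linarith [hz.1]
      field_simp
    · have hz' : z / (1 - t) ∉ Ioo (a / (1 - t)) (b / (1 - t)) := fun h =>
        hz ⟨(div_lt_div_iff_of_pos_right hs).1 h.1, (div_lt_div_iff_of_pos_right hs).1 h.2⟩
      rw [indicator_of_notMem hz, indicator_of_notMem hz']
  refine ⟨fun y => (y - (c + t)) / (2 * π * y), ?_, ?_⟩
  · intro y hy
    rw [hdens]
    exact mp_hilbert ha0 (by linarith) hprod (hmem y hy).1 (hmem y hy).2
  · obtain ⟨hax, hxb⟩ := hmem x hx
    have hx0 : 0 < x := by linarith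
    have hloc : (fun y => (1 / π) *
          Real.arctan ((y - (c + t)) / (2 * π * y) / mpDensity ((c + t) / (1 - t)) (y / (1 - t))))
        =ᶠ[𝓝 x] fun y => (1 / π) * Real.arctan ((y - (c + t)) /
          √(2 * (2 + c - t) * y - (c + t) ^ 2 - y ^ 2)) := by
      filter_upwards [Ioo_mem_nhds hax hxb] with y hy
      have hd := congrFun hdens y
      rw [hd, indicator_of_mem hy, hR]
      have hy0 : 0 < y := by linarith [hy.1]
      have : 0 < √((b - y) * (y - a)) :=
        Real.sqrt_pos.2 (mul_pos (by linarith [hy.2]) (by linarith [hy.1]))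
      congr 2
      field_simp
    refine HasDerivAt.congr_of_eventuallyEq ?_ hloc
    have hpoly : HasDerivAt (fun y : ℝ => 2 * (2 + c - t) * y - (c + t) ^ 2 - y ^ 2)
        (2 * (2 + c - t) - 2 * x) x := by
      have := (((hasDerivAt_id' x).const_mul (2 * (2 + c - t))).sub_const ((c + t) ^ 2)).fun_sub
        (hasDerivAt_pow 2 x)
      refine this.congr_deriv ?_
      norm_num
    have hQ : 0 < √(2 * (2 + c - t) * x - (c + t) ^ 2 - x ^ 2) := Real.sqrt_pos.2 hx
    have hder := ((HasDerivAt.fun_div ((hasDerivAt_id' x).sub_const (c + t)) (hpoly.sqrt hx.ne')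
      hQ.ne').arctan).const_mul (1 / π)
    refine hder.congr_deriv ?_
    have hQ2 := Real.sq_sqrt hx.le
    generalize √(2 * (2 + c - t) * x - (c + t) ^ 2 - x ^ 2) = Q at *
    have h1 : 1 + ((x - (c + t)) / Q) ^ 2 = 4 * (1 - t) * x / Q ^ 2 := by
      field_simp
      linear_combination hQ2
    rw [h1]
    field_simp
    linear_combination 2 * hQ2
end
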